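/- Let X ∈ Sⁿ with distinct eigenvalues μ₁ > … > μ_r and index blocks α₁,…,α_r, fix m ∈ {1,…,r}, and let i = min α_m (so that either i = 1 or λ_{i−1}(X) > λᵢ(X), i.e., λᵢ is a leading eigenvalue at X). Then the i-th largest eigenvalue function λᵢ : Sⁿ → ℝ is twice epi-differentiable at X for every Y ∈ ∂λᵢ(X), and for every H ∈ Sⁿ, d²λᵢ(X,Y)(H) = δ_{C_{λᵢ}(X,Y)}(H) + 2·⟨Y, H·(μ_m·I − X)^†·H⟩, where δ_C denotes the indicator function of C (equal to 0 on C and +∞ elsewhere). -/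

import Mathlib

open Filter Topology Matrix

noncomputable section

namespace SpecPaper

/-! ## Generic variational analysis definitions over a topological real vector space -/

variable {E : Type*}

section Generic

variable [AddCommGroup E] [Module ℝ E] [TopologicalSpace E]

/-- `f x` is finite (neither `+∞` nor `-∞`). -/
def IsFiniteAt (f : E → EReal) (x : E) : Prop :=
  f x ≠ ⊤ ∧ f x ≠ ⊥

/-- The norm induced by a given inner product. -/
noncomputable def nrm (ip : E → E → ℝ) (x : E) : ℝ :=
  Real.sqrt (ip x x)

/-- The subderivative `df(x)(w)`. -/
noncomputable def subderiv (f : E → EReal) (x w : E) : EReal :=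
  Filter.liminf (fun p : ℝ × E => (((p.1)⁻¹ : ℝ) : EReal) * (f (x + p.1 • p.2) - f x))
    ((nhdsWithin (0 : ℝ) (Set.Ioi 0)) ×ˢ nhds w)

/-- The second-order difference quotient `Δ²ₜ f(x,v)(w)`. -/
noncomputable def sdq2 (ip : E → E → ℝ) (f : E → EReal) (x v : E) (t : ℝ) (w : E) : EReal :=
  (((2 / t ^ 2) : ℝ) : EReal) * (f (x + t • w) - f x - ((t * ip v w : ℝ) : EReal))

/-- The second subderivative `d²f(x,v)(w)`. -/
noncomputable def subderiv2 (ip : E → E → ℝ) (f : E → EReal) (x v w : E) : EReal :=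
  Filter.liminf (fun p : ℝ × E => sdq2 ip f x v p.1 p.2)
    ((nhdsWithin (0 : ℝ) (Set.Ioi 0)) ×ˢ nhds w)

/-- Twice epi-differentiability of `f` at `x` for `v`. -/
def TwiceEpiDiff (ip : E → E → ℝ) (f : E → EReal) (x v : E) : Prop :=
  IsFiniteAt f x ∧
    ∀ t : ℕ → ℝ, (∀ k, 0 < t k) → Tendsto t atTop (nhds 0) →
      ∀ w : E, ∃ ws : ℕ → E, Tendsto ws atTop (nhds w) ∧
        Tendsto (fun k => sdq2 ip f x v (t k) (ws k)) atTop (nhds (subderiv2 ip f x v w))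

/-- `v` is a regular subgradient of `f` at `x`. -/
def RegSubgrad (ip : E → E → ℝ) (f : E → EReal) (x v : E) : Prop :=
  IsFiniteAt f x ∧
    (0 : EReal) ≤ Filter.liminf
      (fun y : E =>
        (((nrm ip (y - x))⁻¹ : ℝ) : EReal) * (f y - f x - ((ip v (y - x) : ℝ) : EReal)))
      (nhdsWithin x {x}ᶜ)

/-- `v` is a (limiting) subgradient of `f` at `x`. -/
def LimSubgrad (ip : E → E → ℝ) (f : E → EReal) (x v : E) : Prop :=
  ∃ xs vs : ℕ → E, (∀ k, RegSubgrad ip f (xs k) (vs k)) ∧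
    Tendsto xs atTop (nhds x) ∧ Tendsto vs atTop (nhds v) ∧
    Tendsto (fun k => f (xs k)) atTop (nhds (f x))

/-- The tangent cone to `C` at `x`. -/
def tangentCone (C : Set E) (x : E) : Set E :=
  {w | ∃ (t : ℕ → ℝ) (ws : ℕ → E), (∀ k, 0 < t k) ∧ Tendsto t atTop (nhds 0) ∧
    Tendsto ws atTop (nhds w) ∧ ∀ k, x + t k • ws k ∈ C}

/-- The regular normal cone to `C` at `x`. -/
def regNormalCone (ip : E → E → ℝ) (C : Set E) (x : E) : Set E :=
  {v | ∀ w ∈ tangentCone C x, ip v w ≤ 0}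

/-- The limiting normal cone to `C` at `x`. -/
def limNormalCone (ip : E → E → ℝ) (C : Set E) (x : E) : Set E :=
  {v | ∃ xs vs : ℕ → E, (∀ k, xs k ∈ C) ∧ (∀ k, vs k ∈ regNormalCone ip C (xs k)) ∧
    Tendsto xs atTop (nhds x) ∧ Tendsto vs atTop (nhds v)}

/-- The critical cone `C_f(x,v)`. -/
def criticalCone (ip : E → E → ℝ) (f : E → EReal) (x v : E) : Set E :=
  {w | subderiv f x w = ((ip v w : ℝ) : EReal)}

/-- `f` is locally Lipschitz continuous at `x` relative to its domain. -/
def LocLipAtRelDom (ip : E → E → ℝ) (f : E → EReal) (x : E) : Prop :=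
  IsFiniteAt f x ∧
    ∃ V ∈ nhds x, ∃ ℓ : ℝ, 0 ≤ ℓ ∧
      ∀ a ∈ V, ∀ b ∈ V, f a ≠ ⊤ → f b ≠ ⊤ →
        f a ≠ ⊥ ∧ f b ≠ ⊥ ∧ |(f a).toReal - (f b).toReal| ≤ ℓ * nrm ip (a - b)

/-- `f` is locally Lipschitz continuous relative to its domain. -/
def LocLipRelDom (ip : E → E → ℝ) (f : E → EReal) : Prop :=
  ∀ x : E, f x ≠ ⊤ → LocLipAtRelDom ip f x

/-- `v` is a proximal subgradient of `f` at `x`. -/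
def ProxSubgrad (ip : E → E → ℝ) (f : E → EReal) (x v : E) : Prop :=
  IsFiniteAt f x ∧
    ∃ r > (0 : ℝ), ∃ ε > (0 : ℝ), ∀ x' : E, nrm ip (x' - x) ≤ ε →
      f x + ((ip v (x' - x) - r / 2 * ip (x' - x) (x' - x) : ℝ) : EReal) ≤ f x'

/-- `f` is prox-regular at `x` for `v`. -/
def ProxRegularAtFor (ip : E → E → ℝ) (f : E → EReal) (x v : E) : Prop :=
  IsFiniteAt f x ∧
    (∃ δ > (0 : ℝ), LowerSemicontinuousOn f {x' | nrm ip (x' - x) < δ}) ∧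
    ∃ ε > (0 : ℝ), ∃ r : ℝ, 0 ≤ r ∧
      ∀ x₁ v₁ : E, LimSubgrad ip f x₁ v₁ → nrm ip (x₁ - x) < ε → nrm ip (v₁ - v) < ε →
        f x₁ < f x + (ε : EReal) →
        ∀ x' : E, nrm ip (x' - x) < ε →
          f x₁ + ((ip v₁ (x' - x₁) - r / 2 * ip (x' - x₁) (x' - x₁) : ℝ) : EReal) ≤ f x'

/-- `f` is prox-regular at `x` (for every subgradient). -/
def ProxRegularAt (ip : E → E → ℝ) (f : E → EReal) (x : E) : Prop :=
  ∀ v : E, LimSubgrad ip f x v → ProxRegularAtFor ip f x v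

/-- `f` is subdifferentially continuous at `x`. -/
def SubdiffContAt (ip : E → E → ℝ) (f : E → EReal) (x : E) : Prop :=
  ∀ v : E, LimSubgrad ip f x v →
    ∀ xs vs : ℕ → E, (∀ k, LimSubgrad ip f (xs k) (vs k)) →
      Tendsto xs atTop (nhds x) → Tendsto vs atTop (nhds v) →
      Tendsto (fun k => f (xs k)) atTop (nhds (f x))

/-- `f` is prox-bounded. -/
def ProxBounded (ip : E → E → ℝ) (f : E → EReal) : Prop :=
  ∃ α c : ℝ, ∀ x : E, (c : EReal) ≤ f x + ((α * ip x x : ℝ) : EReal)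

/-- The proximal mapping (as a set of minimizers). -/
def proxSet (ip : E → E → ℝ) (f : E → EReal) (γ : ℝ) (x : E) : Set E :=
  {w | ∀ w' : E,
    f w + ((1 / (2 * γ) * ip (w - x) (w - x) : ℝ) : EReal) ≤
      f w' + ((1 / (2 * γ) * ip (w' - x) (w' - x) : ℝ) : EReal)}

/-- The proximal map of `f` with parameter `γ` is single-valued around `z` and the resulting
map is directionally differentiable at `z`. -/
def ProxSingleDirDiff (ip : E → E → ℝ) (f : E → EReal) (γ : ℝ) (z : E) : Prop :=
  ∃ V ∈ nhds z, ∃ P : E → E, (∀ u ∈ V, proxSet ip f γ u = {P u}) ∧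
    ∀ h : E, ∃ L : E,
      Tendsto (fun t : ℝ => t⁻¹ • (P (z + t • h) - P z)) (nhdsWithin 0 (Set.Ioi 0)) (nhds L)

/-- The parabolic difference quotient. -/
noncomputable def parabQuot (f : E → EReal) (x w : E) (t : ℝ) (z : E) : EReal :=
  (((2 / t ^ 2) : ℝ) : EReal) *
    (f (x + t • w + (t ^ 2 / 2) • z) - f x - ((t * (subderiv f x w).toReal : ℝ) : EReal))

/-- The parabolic subderivative `d²f(x)(w | z)`. -/
noncomputable def parabSubderiv (f : E → EReal) (x w z : E) : EReal :=
  Filter.liminf (fun p : ℝ × E => parabQuot f x w p.1 p.2)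
    ((nhdsWithin (0 : ℝ) (Set.Ioi 0)) ×ˢ nhds z)

/-- `f` is parabolically epi-differentiable at `x` for `w`. -/
def ParabEpiDiff (f : E → EReal) (x w : E) : Prop :=
  (∃ z : E, parabSubderiv f x w z < ⊤) ∧
    ∀ t : ℕ → ℝ, (∀ k, 0 < t k) → Tendsto t atTop (nhds 0) →
      ∀ z : E, ∃ zs : ℕ → E, Tendsto zs atTop (nhds z) ∧
        Tendsto (fun k => parabQuot f x w (t k) (zs k)) atTop (nhds (parabSubderiv f x w z))

/-- `φ` is a generalized quadratic form: its domain is a linear subspace and on the domain it is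
given by a symmetric linear operator. -/
def IsGQF (ip : E → E → ℝ) (φ : E → EReal) : Prop :=
  (φ 0 ≠ ⊤) ∧
  (∀ x y : E, φ x ≠ ⊤ → φ y ≠ ⊤ → φ (x + y) ≠ ⊤) ∧
  (∀ (c : ℝ) (x : E), φ x ≠ ⊤ → φ (c • x) ≠ ⊤) ∧
  ∃ L : E → E,
    (∀ x y : E, φ x ≠ ⊤ → φ y ≠ ⊤ → L (x + y) = L x + L y) ∧
    (∀ (c : ℝ) (x : E), φ x ≠ ⊤ → L (c • x) = c • L x) ∧
    (∀ x y : E, φ x ≠ ⊤ → φ y ≠ ⊤ → ip (L x) y = ip x (L y)) ∧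
    (∀ x : E, φ x ≠ ⊤ → φ x = ((ip (L x) x : ℝ) : EReal))

/-- `f` is generalized twice differentiable at `x` for `v`. -/
def GenTwiceDiff (ip : E → E → ℝ) (f : E → EReal) (x v : E) : Prop :=
  TwiceEpiDiff ip f x v ∧ IsGQF ip (subderiv2 ip f x v)

/-- Proto-differentiability of a set-valued map `F` at `x` for `y ∈ F x`. -/
def ProtoDiff (F : E → Set E) (x y : E) : Prop :=
  ∀ w η : E, (w, η) ∈ tangentCone {p : E × E | p.2 ∈ F p.1} (x, y) →
    ∀ t : ℕ → ℝ, (∀ k, 0 < t k) → Tendsto t atTop (nhds 0) →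
      ∃ ws ηs : ℕ → E, Tendsto ws atTop (nhds w) ∧ Tendsto ηs atTop (nhds η) ∧
        ∀ k, y + t k • ηs k ∈ F (x + t k • ws k)

/-- Relative interior of a set (interior relative to its affine hull). -/
def relInterior (C : Set E) : Set E :=
  {y | y ∈ C ∧ ∃ V ∈ nhds y, ∀ z ∈ V, z ∈ affineSpan ℝ C → z ∈ C}

/-- A polyhedral set: the intersection of finitely many closed half-spaces. -/
def IsPolyhedral (ip : E → E → ℝ) (C : Set E) : Prop :=
  ∃ (k : ℕ) (a : Fin k → E) (b : Fin k → ℝ), C = {x | ∀ j : Fin k, ip (a j) x ≤ b j}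

/-- The subdifferential of a convex function. -/
def convexSubdiff (ip : E → E → ℝ) (f : E → EReal) (x : E) : Set E :=
  {v | ∀ z : E, f x + ((ip v (z - x) : ℝ) : EReal) ≤ f z}

/-- The natural inner product on `E × ℝ`. -/
def ipProd (ip : E → E → ℝ) : E × ℝ → E × ℝ → ℝ :=
  fun p q => ip p.1 q.1 + p.2 * q.2

/-- The epigraph of `f`. -/
def epiSet (f : E → EReal) : Set (E × ℝ) :=
  {p | f p.1 ≤ (p.2 : EReal)}

/-- `f` is subdifferentially regular at `x`. -/
def SubdiffRegularAt (ip : E → E → ℝ) (f : E → EReal) (x : E) : Prop :=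
  IsFiniteAt f x ∧
    regNormalCone (ipProd ip) (epiSet f) (x, (f x).toReal) =
      limNormalCone (ipProd ip) (epiSet f) (x, (f x).toReal)

/-! Real-valued versions: semidifferentiability, gradients. -/

/-- `f` is semidifferentiable at `x`. -/
def SemiDiffAt (f : E → ℝ) (x : E) : Prop :=
  ∀ w : E, ∃ d : ℝ,
    Tendsto (fun p : ℝ × E => (p.1)⁻¹ * (f (x + p.1 • p.2) - f x))
      ((nhdsWithin (0 : ℝ) (Set.Ioi 0)) ×ˢ nhds w) (nhds d)

/-- The (real value of the) subderivative of a real-valued function. -/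
noncomputable def dReal (f : E → ℝ) (x w : E) : ℝ :=
  (subderiv (fun y => ((f y : ℝ) : EReal)) x w).toReal

/-- The second-order difference quotient built from the subderivative. -/
noncomputable def sdq2R (f : E → ℝ) (x : E) (t : ℝ) (w : E) : ℝ :=
  (2 / t ^ 2) * (f (x + t • w) - f x - t * dReal f x w)

/-- `f` is twice semidifferentiable at `x`. -/
def TwiceSemiDiffAt (f : E → ℝ) (x : E) : Prop :=
  SemiDiffAt f x ∧
    ∀ w : E, ∃ d : ℝ,
      Tendsto (fun p : ℝ × E => sdq2R f x p.1 p.2)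
        ((nhdsWithin (0 : ℝ) (Set.Ioi 0)) ×ˢ nhds w) (nhds d)

/-- The second semiderivative `d²f(x)(w)` (the liminf; it is the full limit whenever `f` is
twice semidifferentiable at `x`). -/
noncomputable def secondSemiDeriv (f : E → ℝ) (x w : E) : EReal :=
  Filter.liminf (fun p : ℝ × E => ((sdq2R f x p.1 p.2 : ℝ) : EReal))
    ((nhdsWithin (0 : ℝ) (Set.Ioi 0)) ×ˢ nhds w)

/-- `f` is (Fréchet) differentiable at `x` with gradient `g` (w.r.t. inner product `ip`). -/
def HasGradAt (ip : E → E → ℝ) (f : E → ℝ) (x g : E) : Prop :=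
  Tendsto (fun y : E => (nrm ip (y - x))⁻¹ * (f y - f x - ip g (y - x)))
    (nhdsWithin x {x}ᶜ) (nhds 0)

/-- `f` is locally Lipschitz continuous around `x`. -/
def LocLipAt (ip : E → E → ℝ) (f : E → ℝ) (x : E) : Prop :=
  ∃ V ∈ nhds x, ∃ ℓ : ℝ, 0 ≤ ℓ ∧ ∀ a ∈ V, ∀ b ∈ V, |f a - f b| ≤ ℓ * nrm ip (a - b)

/-- `f` is twice differentiable at `x` with gradient map `G` near `x` and second derivative
(the derivative of `G` at `x`) given by the linear map `Dxx`. -/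
def HasSecondDerivAt (ip : E → E → ℝ) (f : E → EReal) (x : E) (G : E → E) (Dxx : E → E) :
    Prop :=
  ∃ V ∈ nhds x, ∃ fr : E → ℝ,
    (∀ z ∈ V, f z = ((fr z : ℝ) : EReal)) ∧
    (∀ z ∈ V, HasGradAt ip fr z (G z)) ∧
    IsLinearMap ℝ Dxx ∧
    Tendsto (fun z : E => (nrm ip (z - x))⁻¹ • (G z - G x - Dxx (z - x)))
      (nhdsWithin x {x}ᶜ) (nhds 0)

/-- `f` is twice differentiable at `x`. -/
def TwiceDiffAt (ip : E → E → ℝ) (f : E → EReal) (x : E) : Prop :=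
  ∃ G Dxx : E → E, HasSecondDerivAt ip f x G Dxx

end Generic

/-! ## Eigenvalues and spectral machinery -/

open scoped Classical in
/-- The eigenvalues of a real symmetric matrix, arranged in nonincreasing order
(junk value `0` if the matrix is not symmetric). -/
noncomputable def eigval {n : ℕ} (X : Matrix (Fin n) (Fin n) ℝ) : Fin n → ℝ :=
  if h : X.IsHermitian then
    fun i => h.eigenvalues (Tuple.sort (fun j => -h.eigenvalues j) i)
  else 0

/-- `Oⁿ(X)`: orthogonal matrices realizing the ordered spectral decomposition of `X`. -/
def eigOrth {n : ℕ} (X : Matrix (Fin n) (Fin n) ℝ) : Set (Matrix (Fin n) (Fin n) ℝ) :=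
  {U | U * Uᵀ = 1 ∧ X = U * Matrix.diagonal (eigval X) * Uᵀ}

open scoped Classical in
/-- The block `α_m` of indices `j` whose eigenvalue `λ_j(X)` equals `λ_i(X)`. -/
noncomputable def blockSet {n : ℕ} (X : Matrix (Fin n) (Fin n) ℝ) (i : Fin n) :
    Finset (Fin n) :=
  Finset.univ.filter fun j => eigval X j = eigval X i

lemma mem_blockSet_self {n : ℕ} (X : Matrix (Fin n) (Fin n) ℝ) (i : Fin n) :
    i ∈ blockSet X i := by
  simp [blockSet]

/-- The increasing enumeration of the block of `i`. -/
noncomputable def blockEmb {n : ℕ} (X : Matrix (Fin n) (Fin n) ℝ) (i : Fin n) :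
    Fin (blockSet X i).card → Fin n :=
  fun a => ((blockSet X i).orderIsoOfFin rfl a : Fin n)

/-- The position of `i` inside its own block. -/
noncomputable def blockIdx {n : ℕ} (X : Matrix (Fin n) (Fin n) ℝ) (i : Fin n) :
    Fin (blockSet X i).card :=
  ((blockSet X i).orderIsoOfFin rfl).symm ⟨i, mem_blockSet_self X i⟩

/-- The principal submatrix of `M` corresponding to the block of `i` (for `X`). -/
noncomputable def blockMat {n : ℕ} (X M : Matrix (Fin n) (Fin n) ℝ) (i : Fin n) :
    Matrix (Fin (blockSet X i).card) (Fin (blockSet X i).card) ℝ :=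
  Matrix.of fun a b => M (blockEmb X i a) (blockEmb X i b)

/-- The directional derivative `λ'(X;H)` of the ordered eigenvalue map, computed through
`U ∈ Oⁿ(X)`: blockwise ordered eigenvalues of `U_{α_m}ᵀ H U_{α_m}`. -/
noncomputable def lambdaDir {n : ℕ} (X U H : Matrix (Fin n) (Fin n) ℝ) : Fin n → ℝ :=
  fun i => eigval (blockMat X (Uᵀ * H * U) i) (blockIdx X i)

open scoped Classical in
/-- The Moore–Penrose pseudoinverse of a square real matrix, characterized by the four
Penrose equations. -/
noncomputable def pinv {n : ℕ} (A : Matrix (Fin n) (Fin n) ℝ) :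
    Matrix (Fin n) (Fin n) ℝ :=
  if h : ∃ B : Matrix (Fin n) (Fin n) ℝ,
      A * B * A = A ∧ B * A * B = B ∧ (A * B)ᵀ = A * B ∧ (B * A)ᵀ = B * A
  then h.choose else 0

/-- The curvature term `2 ∑ₘ ⟨Diag(y)_{αₘαₘ}, U_{αₘ}ᵀ H (μₘ I - X)† H U_{αₘ}⟩`, written as a
single sum over all indices. -/
noncomputable def curvTerm {n : ℕ} (X U H : Matrix (Fin n) (Fin n) ℝ) (y : Fin n → ℝ) : ℝ :=
  2 * ∑ i : Fin n, y i *
    (Uᵀ * (H * pinv (eigval X i • (1 : Matrix (Fin n) (Fin n) ℝ) - X) * H) * U) i i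

/-- Two symmetric matrices admit a simultaneous ordered spectral decomposition. -/
def simOrdSpec {k : ℕ} (A B : Matrix (Fin k) (Fin k) ℝ) : Prop :=
  ∃ P : Matrix (Fin k) (Fin k) ℝ, P * Pᵀ = 1 ∧
    A = P * Matrix.diagonal (eigval A) * Pᵀ ∧
    B = P * Matrix.diagonal (eigval B) * Pᵀ

/-- The subspace of symmetric `n × n` real matrices. -/
def symSubmodule (n : ℕ) : Submodule ℝ (Matrix (Fin n) (Fin n) ℝ) where
  carrier := {A | A.IsSymm}
  add_mem' := by
    intro a b ha hb
    simp only [Set.mem_setOf_eq, Matrix.IsSymm] at *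
    rw [Matrix.transpose_add, ha, hb]
  zero_mem' := by
    simp only [Set.mem_setOf_eq, Matrix.IsSymm, Matrix.transpose_zero]
  smul_mem' := by
    intro c a ha
    simp only [Set.mem_setOf_eq, Matrix.IsSymm] at *
    rw [Matrix.transpose_smul, ha]

/-- The space `Sⁿ` of symmetric `n × n` real matrices. -/
abbrev Sym (n : ℕ) : Type := ↥(symSubmodule n)

/-- The trace inner product `⟨A, B⟩ = tr(AB)` on `Sⁿ`. -/
noncomputable def ipM {n : ℕ} (A B : Sym n) : ℝ :=
  ((A : Matrix (Fin n) (Fin n) ℝ) * (B : Matrix (Fin n) (Fin n) ℝ)).trace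

/-- The Euclidean inner product on `ℝⁿ`. -/
def ipV {n : ℕ} (v w : Fin n → ℝ) : ℝ :=
  ∑ i, v i * w i

/-- The spectral function `g = θ ∘ λ` on `Sⁿ`. -/
noncomputable def specFn {n : ℕ} (θ : (Fin n → ℝ) → EReal) : Sym n → EReal :=
  fun A => θ (eigval (A : Matrix (Fin n) (Fin n) ℝ))

/-- A function on `ℝⁿ` is symmetric (permutation invariant). -/
def SymmetricFn {n : ℕ} {α : Type*} (θ : (Fin n → ℝ) → α) : Prop :=
  ∀ (x : Fin n → ℝ) (σ : Equiv.Perm (Fin n)), θ (fun i => x (σ i)) = θ x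

/-- The diagonal matrix `Diag(w)` as an element of `Sⁿ`. -/
noncomputable def diagSym {n : ℕ} (w : Fin n → ℝ) : Sym n :=
  ⟨Matrix.diagonal w, Matrix.isSymm_diagonal w⟩

/-- The `i`-th order statistic: `orderStat x i` is the `i`-th largest entry of `x`. -/
noncomputable def orderStat {n : ℕ} (x : Fin n → ℝ) : Fin n → ℝ :=
  fun i => x (Tuple.sort (fun j => -x j) i)

/-!
Write `μ` for the `i`-th eigenvalue of `X` and `G` for the pseudoinverse of `μ I - X`. In the
variational characterization of the `i`-th eigenvalue of `X + t H`, test vectors `u` from the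
`μ`-eigenspace of `X` are sheared to `u + t G H u`. The shear removes the coupling between that
eigenspace and its complement up to `O(t³)`, so that on the eigenspace `X + t H` acts as
`μ + t (H + t H G H)`, which bounds the eigenvalue from both sides with an `o(t²)` error. For the
lower bound, the sum of the eigenspaces of the eigenvalues above `μ` and the line through a single
`u` is a large enough test space, because the eigenvalue is leading.

Regular subgradients of the eigenvalue are density matrices carried by the eigenspace; this is a
closed condition, hence it passes to limiting subgradients `Y`. Averaging the lower bound against
`Y` gives the lower estimate for the second difference quotient. On a critical direction `H` the
form `H` is at most `⟨Y, H⟩` on the eigenspace, and the recovery curve is `H - t P H G H P` with `P`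
the projection onto the eigenspace: the correction cancels the second-order term.
-/

theorem tendsto_nhdsGT_zero_prod_of_continuous [TopologicalSpace E] {φ : ℝ × E → ℝ}
    (hφ : Continuous φ) (w : E) : Tendsto φ (𝓝[>] 0 ×ˢ 𝓝 w) (𝓝 (φ (0, w))) := by
  refine (hφ.tendsto (0, w)).mono_left ?_
  rw [nhds_prod_eq]
  exact prod_mono_left _ nhdsWithin_le_nhds

section SecondOrderCriterion

variable [AddCommGroup E] [Module ℝ E] {ip : E → E → ℝ} {F : E → ℝ} {x v w : E}

theorem sdq2_coe (t : ℝ) :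
    sdq2 ip (fun a => (F a : EReal)) x v t w =
      ((2 / t ^ 2 * (F (x + t • w) - F x - t * ip v w) : ℝ) : EReal) := by
  simp [sdq2]

theorem limsup_sdq2_sub_smul_le {K : E} (hv : IsLinearMap ℝ (ip v))
    (hF : ∀ ε > 0, ∀ᶠ t in 𝓝[>] (0 : ℝ), F (x + t • (w - t • K)) ≤ F x + t * ip v w + ε * t ^ 2) :
    limsup (fun t => sdq2 ip (fun a => (F a : EReal)) x v t (w - t • K)) (𝓝[>] 0) ≤
      ((2 * ip v K : ℝ) : EReal) := by
  refine EReal.le_of_forall_lt_iff_le.1 fun c hc => ?_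
  rw [EReal.coe_lt_coe_iff] at hc
  refine limsup_le_of_le (by isBoundedDefault) ?_
  filter_upwards [hF ((c - 2 * ip v K) / 2) (by linarith), self_mem_nhdsWithin] with t hFt ht
  have ht : 0 < t := ht
  rw [sdq2_coe, EReal.coe_le_coe_iff, div_mul_eq_mul_div, div_le_iff₀ (by positivity),
    hv.map_sub, hv.map_smul, smul_eq_mul]
  nlinarith

variable [TopologicalSpace E]

theorem twiceEpiDiff_and_subderiv2_eq {f : E → EReal} {c : E → EReal} (hfin : IsFiniteAt f x)
    (hlow : ∀ w, c w ≤ subderiv2 ip f x v w)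
    (hrec : ∀ w, ∃ ω : ℝ → E, Tendsto ω (𝓝[>] 0) (𝓝 w) ∧
      limsup (fun t => sdq2 ip f x v t (ω t)) (𝓝[>] 0) ≤ c w) :
    TwiceEpiDiff ip f x v ∧ ∀ w, subderiv2 ip f x v w = c w := by
  have hcurve (w : E) : ∃ ω : ℝ → E, Tendsto ω (𝓝[>] 0) (𝓝 w) ∧ subderiv2 ip f x v w = c w ∧
      Tendsto (fun t => sdq2 ip f x v t (ω t)) (𝓝[>] 0) (𝓝 (c w)) := by
    obtain ⟨ω, hω, hsup⟩ := hrec w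
    have hinf : subderiv2 ip f x v w ≤ liminf (fun t => sdq2 ip f x v t (ω t)) (𝓝[>] 0) :=
      (liminf_le_liminf_of_le (tendsto_id.prodMk hω)).trans_eq (liminf_comp ..).symm
    have hle : subderiv2 ip f x v w ≤ c w := hinf.trans (le_trans liminf_le_limsup hsup)
    exact ⟨ω, hω, hle.antisymm (hlow w),
      tendsto_of_le_liminf_of_limsup_le ((hlow w).trans hinf) hsup⟩
  refine ⟨⟨hfin, fun t ht ht0 w => ?_⟩, fun w => (hcurve w).choose_spec.2.1⟩
  obtain ⟨ω, hω, heq, hlim⟩ := hcurve w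
  have ht' : Tendsto t atTop (𝓝[>] 0) := tendsto_nhdsWithin_iff.2 ⟨ht0, .of_forall ht⟩
  exact ⟨ω ∘ t, hω.comp ht', heq ▸ hlim.comp ht'⟩

theorem le_subderiv_of_eventually {φ : ℝ × E → ℝ} {c : ℝ}
    (hφ : Tendsto φ (𝓝[>] 0 ×ˢ 𝓝 w) (𝓝 c))
    (hF : ∀ᶠ p in 𝓝[>] 0 ×ˢ 𝓝 w, F x + p.1 * φ p ≤ F (x + p.1 • p.2)) :
    (c : EReal) ≤ subderiv (fun a => (F a : EReal)) x w := by
  rw [← ((continuous_coe_real_ereal.tendsto c).comp hφ).liminf_eq]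
  refine liminf_le_liminf ?_
  filter_upwards [hF, tendsto_fst.eventually self_mem_nhdsWithin] with p hp (ht : 0 < p.1)
  simp only [Function.comp_apply, ← EReal.coe_sub, ← EReal.coe_mul, EReal.coe_le_coe_iff]
  rw [inv_mul_eq_div, le_div_iff₀ ht]
  linarith

theorem subderiv2_eq_top_of_lt_subderiv (hv : Continuous (ip v))
    (hw : (ip v w : EReal) < subderiv (fun a => (F a : EReal)) x w) :
    subderiv2 ip (fun a => (F a : EReal)) x v w = ⊤ := by
  obtain ⟨b, hwb, hb⟩ := EReal.lt_iff_exists_real_btwn.1 hw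
  obtain ⟨a, hwa, hab⟩ := exists_between (EReal.coe_lt_coe_iff.1 hwb)
  have hblow : Tendsto (fun p : ℝ × E => ((2 * (b - a) * p.1⁻¹ : ℝ) : EReal))
      (𝓝[>] 0 ×ˢ 𝓝 w) (𝓝 ⊤) :=
    EReal.tendsto_coe_atTop.comp <|
      (tendsto_inv_nhdsGT_zero.comp tendsto_fst).const_mul_atTop (by linarith)
  rw [eq_top_iff, ← hblow.liminf_eq]
  refine liminf_le_liminf ?_
  filter_upwards [eventually_lt_of_lt_liminf hb, tendsto_fst.eventually self_mem_nhdsWithin,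
    tendsto_snd.eventually ((hv.tendsto w).eventually_lt_const hwa)] with p hp (ht : 0 < p.1) hpa
  rw [sdq2_coe, EReal.coe_le_coe_iff]
  rw [← EReal.coe_sub, ← EReal.coe_mul, EReal.coe_lt_coe_iff, inv_mul_eq_div, lt_div_iff₀ ht] at hp
  have hdiff : (b - a) * p.1 ≤ F (x + p.1 • p.2) - F x - p.1 * ip v p.2 := by nlinarith
  calc 2 * (b - a) * p.1⁻¹ = 2 / p.1 ^ 2 * ((b - a) * p.1) := by field_simp
    _ ≤ _ := by gcongr

theorem two_mul_le_subderiv2 {Q : E → ℝ} (hQ : Continuous Q)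
    (hF : ∀ ε > 0, ∀ᶠ p : ℝ × E in 𝓝[>] 0 ×ˢ 𝓝 w,
      F x + p.1 * ip v p.2 + p.1 ^ 2 * Q p.2 - ε * p.1 ^ 2 ≤ F (x + p.1 • p.2)) :
    ((2 * Q w : ℝ) : EReal) ≤ subderiv2 ip (fun a => (F a : EReal)) x v w := by
  refine EReal.ge_of_forall_gt_iff_ge.1 fun c hc => ?_
  rw [EReal.coe_lt_coe_iff] at hc
  have hε : 0 < (2 * Q w - c) / 4 := by linarith
  refine le_liminf_of_le (by isBoundedDefault) ?_
  have hQw : ∀ᶠ p : ℝ × E in 𝓝[>] 0 ×ˢ 𝓝 w, Q w - (2 * Q w - c) / 4 < Q p.2 :=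
    tendsto_snd.eventually ((hQ.tendsto w).eventually_const_lt (by linarith))
  filter_upwards [hF _ hε, hQw, tendsto_fst.eventually self_mem_nhdsWithin] with p hp hpQ ht
  have ht : 0 < p.1 := ht
  rw [sdq2_coe, EReal.coe_le_coe_iff, div_mul_eq_mul_div, le_div_iff₀ (by positivity)]
  nlinarith [sq_pos_of_pos ht]

open scoped Classical in
theorem twiceEpiDiff_and_subderiv2_eq_indicator_add [ContinuousAdd E] [ContinuousSMul ℝ E]
    {Q : E → ℝ} (hv : IsLinearMap ℝ (ip v)) (hv_cont : Continuous (ip v)) (hQ : Continuous Q)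
    (hlow : ∀ w, ∀ ε > 0, ∀ᶠ p : ℝ × E in 𝓝[>] 0 ×ˢ 𝓝 w,
      F x + p.1 * ip v p.2 + p.1 ^ 2 * Q p.2 - ε * p.1 ^ 2 ≤ F (x + p.1 • p.2))
    (hrec : ∀ w ∈ criticalCone ip (fun a => (F a : EReal)) x v, ∃ K, ip v K = Q w ∧
      ∀ ε > 0, ∀ᶠ t in 𝓝[>] (0 : ℝ),
        F (x + t • (w - t • K)) ≤ F x + t * ip v w + ε * t ^ 2) :
    TwiceEpiDiff ip (fun a => (F a : EReal)) x v ∧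
      ∀ w, subderiv2 ip (fun a => (F a : EReal)) x v w =
        (if w ∈ criticalCone ip (fun a => (F a : EReal)) x v then (0 : EReal) else ⊤) +
          ((2 * Q w : ℝ) : EReal) := by
  have hsub (w : E) : (ip v w : EReal) ≤ subderiv (fun a => (F a : EReal)) x w := by
    refine le_subderiv_of_eventually (φ := fun p => ip v p.2 + p.1 * (Q p.2 - 1)) ?_ ?_
    · have hcont : Continuous fun p : ℝ × E => ip v p.2 + p.1 * (Q p.2 - 1) := by fun_prop
      simpa using tendsto_nhdsGT_zero_prod_of_continuous hcont w
    · filter_upwards [hlow w 1 one_pos] with p hp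
      linarith
  refine twiceEpiDiff_and_subderiv2_eq (by simp [IsFiniteAt]) (fun w => ?_) (fun w => ?_)
  · split_ifs with hw
    · exact (zero_add _).trans_le (two_mul_le_subderiv2 hQ (hlow w))
    · rw [subderiv2_eq_top_of_lt_subderiv hv_cont ((hsub w).lt_of_ne' hw)]
      exact le_top
  · split_ifs with hw
    · obtain ⟨K, hK, hF⟩ := hrec w hw
      have hcont : Continuous fun t : ℝ => w - t • K := by
        simp only [sub_eq_add_neg, ← neg_smul]
        fun_prop
      refine ⟨fun t => w - t • K, (hcont.tendsto' 0 w (by simp)).mono_left nhdsWithin_le_nhds, ?_⟩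
      rw [zero_add, ← hK]
      exact limsup_sdq2_sub_smul_le hv hF
    · exact ⟨fun _ => w, tendsto_const_nhds, by simp only [EReal.top_add_coe, le_top]⟩

theorem RegSubgrad.ip_le_of_eventually_le [ContinuousAdd E] [ContinuousSMul ℝ E]
    {D : E} {c : ℝ} (hip : IsBilinearMap ℝ ip)
    (hv : RegSubgrad ip (fun a => (F a : EReal)) x v) (hD : D ≠ 0 → 0 < ip D D)
    (hF : ∀ᶠ t in 𝓝[>] (0 : ℝ), F (x + t • D) ≤ F x + t * c) : ip v D ≤ c := by
  rcases eq_or_ne D 0 with rfl | hD0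
  · have hv0 : ip v 0 = 0 := by simpa using hip.smul_right 0 v 0
    obtain ⟨t, hFt, ht : 0 < t⟩ := (hF.and self_mem_nhdsWithin).exists
    rw [smul_zero, add_zero, le_add_iff_nonneg_right] at hFt
    exact hv0.trans_le (nonneg_of_mul_nonneg_right hFt ht)
  have hnrmD : 0 < nrm ip D := Real.sqrt_pos.2 (hD hD0)
  have hcurve : Tendsto (fun t : ℝ => x + t • D) (𝓝[>] 0) (𝓝[≠] x) := by
    refine tendsto_nhdsWithin_iff.2 ⟨?_, ?_⟩
    · have hcont : Continuous fun t : ℝ => x + t • D := by fun_prop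
      exact (hcont.tendsto' 0 x (by simp)).mono_left nhdsWithin_le_nhds
    · filter_upwards [self_mem_nhdsWithin] with t (ht : 0 < t)
      simpa using ⟨ht.ne', hD0⟩
  have hquot : ∀ᶠ t in 𝓝[>] (0 : ℝ),
      (((nrm ip (x + t • D - x))⁻¹ : ℝ) : EReal) *
          ((F (x + t • D) : EReal) - F x - ((ip v (x + t • D - x) : ℝ) : EReal)) ≤
        (((c - ip v D) / nrm ip D : ℝ) : EReal) := by
    filter_upwards [hF, self_mem_nhdsWithin] with t hFt (ht : 0 < t)
    have hnrm : nrm ip (t • D) = t * nrm ip D := by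
      rw [nrm, hip.smul_left, hip.smul_right, smul_eq_mul, smul_eq_mul, ← mul_assoc,
        Real.sqrt_mul (mul_self_nonneg t), Real.sqrt_mul_self ht.le, nrm]
    rw [add_sub_cancel_left, hnrm, hip.smul_right, smul_eq_mul, ← EReal.coe_sub, ← EReal.coe_sub,
      ← EReal.coe_mul, EReal.coe_le_coe_iff, inv_mul_le_iff₀ (mul_pos ht hnrmD)]
    field_simp
    linarith
  have hlim := (hv.2.trans ((liminf_le_liminf_of_le hcurve).trans_eq (liminf_comp ..).symm)).trans
    (liminf_le_liminf hquot)
  rw [liminf_const, EReal.coe_nonneg, le_div_iff₀ hnrmD] at hlim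
  linarith

end SecondOrderCriterion

section CoordinateSubspaces

variable {ι : Type*} [Fintype ι] {U : Matrix ι ι ℝ} {s : Finset ι}

/-- The vectors whose coordinates in the basis formed by the columns of an orthogonal matrix `U`
vanish at every index of `s`. Used as test space in the Courant–Fischer inequalities. -/
def coordAnnihilator (U : Matrix ι ι ℝ) (s : Finset ι) : Submodule ℝ (ι → ℝ) :=
  LinearMap.ker (LinearMap.funLeft ℝ ℝ (Subtype.val : s → ι) ∘ₗ Uᵀ.mulVecLin)

theorem mem_coordAnnihilator {x : ι → ℝ} :
    x ∈ coordAnnihilator U s ↔ ∀ j ∈ s, (Uᵀ *ᵥ x) j = 0 := by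
  simp [coordAnnihilator, funext_iff, LinearMap.funLeft_apply, mulVec_transpose]

theorem card_le_finrank_coordAnnihilator_add_card :
    Fintype.card ι ≤ Module.finrank ℝ (coordAnnihilator U s) + s.card := by
  have hrank := LinearMap.finrank_range_add_finrank_ker
    (LinearMap.funLeft ℝ ℝ (Subtype.val : s → ι) ∘ₗ Uᵀ.mulVecLin)
  have hrange := Submodule.finrank_le (LinearMap.range
    (LinearMap.funLeft ℝ ℝ (Subtype.val : s → ι) ∘ₗ Uᵀ.mulVecLin))
  simp only [Module.finrank_fintype_fun_eq_card, Fintype.card_coe] at hrank hrange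
  rw [coordAnnihilator]
  lia

theorem exists_mem_coordAnnihilator_ne_zero {W : Submodule ℝ (ι → ℝ)}
    (hW : s.card < Module.finrank ℝ W) : ∃ x ∈ W, x ∈ coordAnnihilator U s ∧ x ≠ 0 := by
  by_contra! hzero
  have hdisj : Disjoint W (coordAnnihilator U s) :=
    Submodule.disjoint_def.2 fun x hxW hx => hzero x hxW hx
  have hle := Submodule.finrank_add_finrank_le_of_disjoint hdisj
  have hcard := card_le_finrank_coordAnnihilator_add_card (U := U) (s := s)
  rw [Module.finrank_fintype_fun_eq_card] at hle
  lia

variable [DecidableEq ι] {e : ι → ℝ} {c : ℝ} {x : ι → ℝ}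

theorem dotProduct_self_eq_sum_coord_sq (hU : U * Uᵀ = 1) (x : ι → ℝ) :
    x ⬝ᵥ x = ∑ j, (Uᵀ *ᵥ x) j ^ 2 := by
  calc x ⬝ᵥ x = (Uᵀ *ᵥ x) ⬝ᵥ (Uᵀ *ᵥ x) := by
        rw [dotProduct_mulVec, vecMul_transpose, mulVec_mulVec, hU, one_mulVec]
    _ = ∑ j, (Uᵀ *ᵥ x) j ^ 2 := by simp only [dotProduct, sq]

theorem dotProduct_conj_diagonal_mulVec (x : ι → ℝ) :
    x ⬝ᵥ (U * diagonal e * Uᵀ) *ᵥ x = ∑ j, e j * (Uᵀ *ᵥ x) j ^ 2 := by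
  calc x ⬝ᵥ (U * diagonal e * Uᵀ) *ᵥ x = (Uᵀ *ᵥ x) ⬝ᵥ diagonal e *ᵥ (Uᵀ *ᵥ x) := by
        rw [mul_assoc, ← mulVec_mulVec, dotProduct_mulVec, ← mulVec_transpose, mulVec_mulVec]
    _ = ∑ j, e j * (Uᵀ *ᵥ x) j ^ 2 := by
        simp only [dotProduct, mulVec_diagonal]
        exact Finset.sum_congr rfl fun j _ => by ring

theorem dotProduct_conj_diagonal_mulVec_le (hU : U * Uᵀ = 1) (hx : x ∈ coordAnnihilator U s)
    (he : ∀ j ∉ s, e j ≤ c) : x ⬝ᵥ (U * diagonal e * Uᵀ) *ᵥ x ≤ c * (x ⬝ᵥ x) := by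
  rw [dotProduct_conj_diagonal_mulVec, dotProduct_self_eq_sum_coord_sq hU, Finset.mul_sum]
  refine Finset.sum_le_sum fun j _ => ?_
  by_cases hj : j ∈ s
  · simp [mem_coordAnnihilator.1 hx j hj]
  · exact mul_le_mul_of_nonneg_right (he j hj) (sq_nonneg _)

theorem le_dotProduct_conj_diagonal_mulVec (hU : U * Uᵀ = 1) (hx : x ∈ coordAnnihilator U s)
    (he : ∀ j ∉ s, c ≤ e j) : c * (x ⬝ᵥ x) ≤ x ⬝ᵥ (U * diagonal e * Uᵀ) *ᵥ x := by
  rw [dotProduct_conj_diagonal_mulVec, dotProduct_self_eq_sum_coord_sq hU, Finset.mul_sum]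
  refine Finset.sum_le_sum fun j _ => ?_
  by_cases hj : j ∈ s
  · simp [mem_coordAnnihilator.1 hx j hj]
  · exact mul_le_mul_of_nonneg_right (he j hj) (sq_nonneg _)

end CoordinateSubspaces

section CourantFischer

variable {n : ℕ} {A : Matrix (Fin n) (Fin n) ℝ} {i : Fin n} {c : ℝ}
  {W : Submodule ℝ (Fin n → ℝ)}

theorem eigval_antitone (A : Matrix (Fin n) (Fin n) ℝ) : Antitone (eigval A) := by
  intro j k hjk
  unfold eigval
  split_ifs with hA
  · exact neg_le_neg_iff.1 (Tuple.monotone_sort (fun l => -hA.eigenvalues l) hjk)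
  · exact le_rfl

theorem eigOrth_nonempty (hA : A.IsSymm) : (eigOrth A).Nonempty := by
  have hH : A.IsHermitian := hA
  let σ : Equiv.Perm (Fin n) := Tuple.sort fun j => -hH.eigenvalues j
  let V : Matrix (Fin n) (Fin n) ℝ := hH.eigenvectorUnitary
  have hdiag : diagonal (eigval A) = (diagonal hH.eigenvalues).submatrix σ σ := by
    rw [submatrix_diagonal_equiv, eigval, dif_pos hH]
    rfl
  refine ⟨V.submatrix id σ, ?_, ?_⟩
  · rw [transpose_submatrix, submatrix_mul_equiv, submatrix_id_id]
    exact Unitary.coe_mul_star_self hH.eigenvectorUnitary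
  · rw [hdiag, transpose_submatrix, submatrix_mul_equiv, submatrix_mul_equiv, submatrix_id_id]
    exact hH.spectral_theorem

theorem le_eigval_of_finrank (hA : A.IsSymm) (hW : (i : ℕ) < Module.finrank ℝ W)
    (hc : ∀ x ∈ W, c * (x ⬝ᵥ x) ≤ x ⬝ᵥ A *ᵥ x) : c ≤ eigval A i := by
  obtain ⟨U, hU, hAU⟩ := eigOrth_nonempty hA
  obtain ⟨x, hxW, hx, hx0⟩ : ∃ x ∈ W, x ∈ coordAnnihilator U (Finset.Iio i) ∧ x ≠ 0 :=
    exists_mem_coordAnnihilator_ne_zero (by simpa using hW)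
  refine le_of_mul_le_mul_right ((hc x hxW).trans ?_) (dotProduct_self_star_pos_iff.2 hx0)
  nth_rw 1 [hAU]
  exact dotProduct_conj_diagonal_mulVec_le hU hx fun j hj =>
    eigval_antitone A (by simpa using hj)

theorem eigval_le_of_finrank (hA : A.IsSymm) (hW : n ≤ Module.finrank ℝ W + i)
    (hc : ∀ x ∈ W, x ⬝ᵥ A *ᵥ x ≤ c * (x ⬝ᵥ x)) : eigval A i ≤ c := by
  obtain ⟨U, hU, hAU⟩ := eigOrth_nonempty hA
  obtain ⟨x, hxW, hx, hx0⟩ : ∃ x ∈ W, x ∈ coordAnnihilator U (Finset.Ioi i) ∧ x ≠ 0 :=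
    exists_mem_coordAnnihilator_ne_zero (by rw [Fin.card_Ioi]; lia)
  refine le_of_mul_le_mul_right (le_trans ?_ (hc x hxW)) (dotProduct_self_star_pos_iff.2 hx0)
  nth_rw 2 [hAU]
  exact le_dotProduct_conj_diagonal_mulVec hU hx fun j hj =>
    eigval_antitone A (by simpa using hj)

end CourantFischer

section PenroseInverse

variable {ι R : Type*} [Fintype ι] [CommRing R]

/-- `B` satisfies the four Penrose equations for `A`; this is the property by which `pinv A` is
chosen. -/
structure IsPenroseInverse (A B : Matrix ι ι R) : Prop where
  mul_mul_self : A * B * A = A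
  self_mul_mul : B * A * B = B
  mul_symm : (A * B)ᵀ = A * B
  symm_mul : (B * A)ᵀ = B * A

namespace IsPenroseInverse

variable {A B C : Matrix ι ι R}

theorem transpose (h : IsPenroseInverse A B) : IsPenroseInverse Aᵀ Bᵀ where
  mul_mul_self := by rw [← transpose_mul, ← transpose_mul, ← mul_assoc, h.mul_mul_self]
  self_mul_mul := by rw [← transpose_mul, ← transpose_mul, ← mul_assoc, h.self_mul_mul]
  mul_symm := by rw [← transpose_mul, h.symm_mul, h.symm_mul]
  symm_mul := by rw [← transpose_mul, h.mul_symm, h.mul_symm]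

theorem unique (hB : IsPenroseInverse A B) (hC : IsPenroseInverse A C) : B = C := by
  have hleft : A * B = A * C := by
    calc A * B = (A * C * (A * B))ᵀ := by rw [← mul_assoc, hC.mul_mul_self, hB.mul_symm]
      _ = A * B * (A * C) := by rw [transpose_mul, hB.mul_symm, hC.mul_symm]
      _ = A * C := by rw [← mul_assoc, hB.mul_mul_self]
  have hright : B * A = C * A := by
    calc B * A = (B * A * (C * A))ᵀ := by
          rw [mul_assoc, ← mul_assoc A, hC.mul_mul_self, hB.symm_mul]
      _ = C * A * (B * A) := by rw [transpose_mul, hB.symm_mul, hC.symm_mul]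
      _ = C * A := by rw [mul_assoc, ← mul_assoc A, hB.mul_mul_self]
  calc B = B * (A * B) := by rw [← mul_assoc, hB.self_mul_mul]
    _ = C * A * C := by rw [hleft, ← mul_assoc, hright]
    _ = C := hC.self_mul_mul

end IsPenroseInverse

theorem conj_diagonal_mul_conj_diagonal [DecidableEq ι] {U : Matrix ι ι R} (hU : U * Uᵀ = 1)
    (d e : ι → R) :
    U * diagonal d * Uᵀ * (U * diagonal e * Uᵀ) = U * diagonal (d * e) * Uᵀ := by
  calc U * diagonal d * Uᵀ * (U * diagonal e * Uᵀ)
      = U * diagonal d * (Uᵀ * U) * (diagonal e * Uᵀ) := by simp only [mul_assoc]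
    _ = U * diagonal (d * e) * Uᵀ := by
        rw [mul_eq_one_comm.1 hU, mul_one, ← mul_assoc, mul_assoc U, diagonal_mul_diagonal]
        rfl

theorem isSymm_conj_diagonal [DecidableEq ι] (U : Matrix ι ι R) (e : ι → R) :
    (U * diagonal e * Uᵀ).IsSymm := by
  rw [IsSymm, transpose_mul, transpose_mul, transpose_transpose, diagonal_transpose, mul_assoc]

theorem isPenroseInverse_conj_diagonal {K : Type*} [Field K] [DecidableEq ι] {U : Matrix ι ι K}
    (hU : U * Uᵀ = 1) (e : ι → K) :
    IsPenroseInverse (U * diagonal e * Uᵀ) (U * diagonal e⁻¹ * Uᵀ) := by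
  have hinv (d : ι → K) : d * d⁻¹ * d = d := funext fun j => mul_inv_mul_cancel (d j)
  constructor <;> simp only [conj_diagonal_mul_conj_diagonal hU]
  · rw [hinv]
  · simpa only [inv_inv] using congrArg (U * diagonal · * Uᵀ) (hinv e⁻¹)
  · exact isSymm_conj_diagonal U _
  · exact isSymm_conj_diagonal U _

end PenroseInverse

section KernelProjection

variable {n : ℕ} {A B N M U : Matrix (Fin n) (Fin n) ℝ} {e x : Fin n → ℝ}

theorem IsPenroseInverse.isPenroseInverse_pinv (h : IsPenroseInverse A B) :
    IsPenroseInverse A (pinv A) := by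
  have hex : ∃ B, A * B * A = A ∧ B * A * B = B ∧ (A * B)ᵀ = A * B ∧ (B * A)ᵀ = B * A :=
    ⟨B, h.mul_mul_self, h.self_mul_mul, h.mul_symm, h.symm_mul⟩
  rw [pinv, dif_pos hex]
  obtain ⟨h₁, h₂, h₃, h₄⟩ := hex.choose_spec
  exact ⟨h₁, h₂, h₃, h₄⟩

theorem pinv_conj_diagonal (hU : U * Uᵀ = 1) (e : Fin n → ℝ) :
    pinv (U * diagonal e * Uᵀ) = U * diagonal e⁻¹ * Uᵀ :=
  have h := isPenroseInverse_conj_diagonal hU e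
  h.isPenroseInverse_pinv.unique h

theorem isPenroseInverse_pinv_of_isSymm (hN : N.IsSymm) : IsPenroseInverse N (pinv N) := by
  obtain ⟨U, hU, hNU⟩ := eigOrth_nonempty hN
  rw [hNU]
  exact (isPenroseInverse_conj_diagonal hU _).isPenroseInverse_pinv

theorem isSymm_pinv (hN : N.IsSymm) : (pinv N).IsSymm :=
  have h := isPenroseInverse_pinv_of_isSymm hN
  (hN.eq ▸ h.transpose).unique h

theorem pinv_mul_comm (hN : N.IsSymm) : pinv N * N = N * pinv N := by
  rw [← (isPenroseInverse_pinv_of_isSymm hN).mul_symm, transpose_mul, hN.eq, (isSymm_pinv hN).eq]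

/-- The orthogonal projection onto the kernel of a symmetric matrix `N`. -/
def kerProj (N : Matrix (Fin n) (Fin n) ℝ) : Matrix (Fin n) (Fin n) ℝ :=
  1 - N * pinv N

theorem isSymm_kerProj (hN : N.IsSymm) : (kerProj N).IsSymm := by
  rw [IsSymm, kerProj, transpose_sub, transpose_one, (isPenroseInverse_pinv_of_isSymm hN).mul_symm]

theorem mul_kerProj (hN : N.IsSymm) : N * kerProj N = 0 := by
  rw [kerProj, mul_sub, mul_one, ← pinv_mul_comm hN, ← mul_assoc,
    (isPenroseInverse_pinv_of_isSymm hN).mul_mul_self, sub_self]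

theorem pinv_mul_kerProj (hN : N.IsSymm) : pinv N * kerProj N = 0 := by
  rw [kerProj, mul_sub, mul_one, ← mul_assoc, (isPenroseInverse_pinv_of_isSymm hN).self_mul_mul,
    sub_self]

theorem kerProj_mul_pinv (hN : N.IsSymm) : kerProj N * pinv N = 0 := by
  rw [kerProj, sub_mul, one_mul, ← pinv_mul_comm hN,
    (isPenroseInverse_pinv_of_isSymm hN).self_mul_mul, sub_self]

theorem kerProj_mul_eq_self (hN : N.IsSymm) (hM : N * M = 0) : kerProj N * M = M := by
  rw [kerProj, sub_mul, one_mul, ← pinv_mul_comm hN, mul_assoc, hM, mul_zero, sub_zero]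

theorem mul_kerProj_eq_self (hN : N.IsSymm) (hM : M.IsSymm) (hNM : N * M = 0) :
    M * kerProj N = M := by
  simpa only [transpose_mul, (isSymm_kerProj hN).eq, hM.eq] using
    congrArg transpose (kerProj_mul_eq_self hN hNM)

theorem kerProj_mulVec_eq_self (hN : N.IsSymm) (hx : N *ᵥ x = 0) : kerProj N *ᵥ x = x := by
  rw [kerProj, sub_mulVec, one_mulVec, ← pinv_mul_comm hN, ← mulVec_mulVec, hx, mulVec_zero,
    sub_zero]

theorem coord_kerProj_mulVec (hU : U * Uᵀ = 1) (hN : N = U * diagonal e * Uᵀ) (j : Fin n) :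
    (Uᵀ *ᵥ kerProj N *ᵥ x) j = if e j = 0 then (Uᵀ *ᵥ x) j else 0 := by
  have hproj : Uᵀ *ᵥ kerProj N *ᵥ x = Uᵀ *ᵥ x - diagonal (e * e⁻¹) *ᵥ Uᵀ *ᵥ x := by
    rw [kerProj, hN, pinv_conj_diagonal hU, conj_diagonal_mul_conj_diagonal hU, sub_mulVec,
      one_mulVec, mulVec_sub, mulVec_mulVec _ Uᵀ, ← mul_assoc, ← mul_assoc,
      mul_eq_one_comm.1 hU, one_mul, ← mulVec_mulVec]
  rw [hproj, Pi.sub_apply, mulVec_diagonal]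
  split_ifs with hj <;> simp [hj]

end KernelProjection

section SecondOrderExpansion

open scoped Matrix.Norms.L2Operator

theorem mulVec_dotProduct_mulVec_le {ι : Type*} [Fintype ι] [DecidableEq ι] (M : Matrix ι ι ℝ)
    (x : ι → ℝ) : M *ᵥ x ⬝ᵥ M *ᵥ x ≤ ‖M‖ ^ 2 * (x ⬝ᵥ x) := by
  have hnorm (y : ι → ℝ) : y ⬝ᵥ y = ‖WithLp.toLp 2 y‖ ^ 2 := by
    rw [EuclideanSpace.real_norm_sq_eq, dotProduct]
    exact Finset.sum_congr rfl fun j _ => (sq _).symm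
  rw [hnorm, hnorm, ← mul_pow]
  exact pow_le_pow_left₀ (norm_nonneg _) (M.l2_opNorm_mulVec (WithLp.toLp 2 x)) 2

theorem abs_dotProduct_mulVec_le {ι : Type*} [Fintype ι] [DecidableEq ι] (M : Matrix ι ι ℝ)
    (x : ι → ℝ) : |x ⬝ᵥ M *ᵥ x| ≤ ‖M‖ * (x ⬝ᵥ x) := by
  have hx : 0 ≤ x ⬝ᵥ x := dotProduct_self_star_nonneg x
  have hcs : (x ⬝ᵥ M *ᵥ x) ^ 2 ≤ (x ⬝ᵥ x) * (M *ᵥ x ⬝ᵥ M *ᵥ x) := by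
    simpa only [dotProduct, sq] using
      Finset.sum_mul_sq_le_sq_mul_sq Finset.univ x (M *ᵥ x)
  refine abs_le_of_sq_le_sq (hcs.trans ?_) (by positivity)
  nlinarith [mulVec_dotProduct_mulVec_le M x]

variable {n : ℕ} {X N H : Matrix (Fin n) (Fin n) ℝ} {u v w : Fin n → ℝ} {t σ μ g ε : ℝ}

theorem dotProduct_mulVec_pinv_mul_mulVec (hN : N.IsSymm) (hv : kerProj N *ᵥ v = 0)
    (x : Fin n → ℝ) : v ⬝ᵥ N *ᵥ pinv N *ᵥ x = v ⬝ᵥ x := by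
  have hproj : v ⬝ᵥ kerProj N *ᵥ x = 0 := by
    rw [dotProduct_mulVec, ← mulVec_transpose, isSymm_kerProj hN, hv, zero_dotProduct]
  rw [kerProj, sub_mulVec, one_mulVec, ← mulVec_mulVec, dotProduct_sub, sub_eq_zero] at hproj
  exact hproj.symm

theorem dotProduct_mulVec_comm {ι : Type*} [Fintype ι] {M : Matrix ι ι ℝ} (hM : M.IsSymm)
    (x y : ι → ℝ) : x ⬝ᵥ M *ᵥ y = y ⬝ᵥ M *ᵥ x := by
  rw [dotProduct_mulVec, ← mulVec_transpose, hM.eq, dotProduct_comm]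

/-- Shearing by `t • (pinv N * H) *ᵥ u` removes the cross terms between `u` and `w`. -/
theorem quadForm_shear_eq (hN : N.IsSymm) (hH : H.IsSymm) (hu : N *ᵥ u = 0)
    (hw : kerProj N *ᵥ w = 0) (hv : v = w + t • (pinv N * H) *ᵥ u) :
    t * ((u + v) ⬝ᵥ H *ᵥ (u + v)) - (u + v) ⬝ᵥ N *ᵥ (u + v) - t * σ * ((u + v) ⬝ᵥ (u + v)) =
      t * (u ⬝ᵥ (H + t • (H * pinv N * H)) *ᵥ u - σ * (u ⬝ᵥ u)) - w ⬝ᵥ N *ᵥ w +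
        t * (v ⬝ᵥ H *ᵥ v - σ * (v ⬝ᵥ v)) := by
  set y := (pinv N * H) *ᵥ u with hy
  have hPy : kerProj N *ᵥ y = 0 := by
    rw [hy, mulVec_mulVec, ← mul_assoc, kerProj_mul_pinv hN, zero_mul, zero_mulVec]
  have hPv : kerProj N *ᵥ v = 0 := by rw [hv, mulVec_add, mulVec_smul, hw, hPy, smul_zero, add_zero]
  have hy_eq : y = pinv N *ᵥ H *ᵥ u := (mulVec_mulVec ..).symm
  have hvNy : v ⬝ᵥ N *ᵥ y = v ⬝ᵥ H *ᵥ u := by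
    rw [hy_eq, dotProduct_mulVec_pinv_mul_mulVec hN hPv]
  have hyNy : y ⬝ᵥ N *ᵥ y = y ⬝ᵥ H *ᵥ u := by
    nth_rw 2 [hy_eq]
    exact dotProduct_mulVec_pinv_mul_mulVec hN hPy _
  have huv : u ⬝ᵥ v = 0 := by
    calc u ⬝ᵥ v = v ⬝ᵥ kerProj N *ᵥ u := by rw [kerProj_mulVec_eq_self hN hu, dotProduct_comm]
      _ = 0 := by rw [dotProduct_mulVec_comm (isSymm_kerProj hN), hPv, dotProduct_zero]
  have hwNw : w ⬝ᵥ N *ᵥ w = v ⬝ᵥ N *ᵥ v - 2 * t * (v ⬝ᵥ H *ᵥ u) + t ^ 2 * (y ⬝ᵥ H *ᵥ u) := by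
    rw [eq_sub_of_add_eq hv.symm]
    simp only [mulVec_sub, mulVec_smul, dotProduct_sub, sub_dotProduct, dotProduct_smul,
      smul_dotProduct, smul_eq_mul, dotProduct_mulVec_comm hN y v, hvNy, hyNy]
    ring
  have huHGHu : u ⬝ᵥ (H * pinv N * H) *ᵥ u = y ⬝ᵥ H *ᵥ u := by
    rw [mul_assoc, ← mulVec_mulVec, dotProduct_mulVec_comm hH]
  simp only [mulVec_add, add_mulVec, dotProduct_add, add_dotProduct, hu, dotProduct_zero,
    smul_mulVec, dotProduct_smul, smul_eq_mul]
  rw [dotProduct_mulVec_comm hN u v, hu, hwNw, dotProduct_mulVec_comm hH u v,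
    dotProduct_comm v u, huv, huHGHu]
  simp only [dotProduct_zero]
  ring

/-- The constant in the cubic error term of the second-order expansion of the quadratic form of
`X + t • H` on a vector sheared along `pinv N * H`. -/
def shearErrorConst (N H : Matrix (Fin n) (Fin n) ℝ) (σ : ℝ) : ℝ :=
  2 * (‖H‖ + |σ|) * (1 + ‖pinv N * H‖ ^ 2)

theorem abs_shear_error_le (hv : v = w + t • (pinv N * H) *ᵥ u) :
    |v ⬝ᵥ H *ᵥ v - σ * (v ⬝ᵥ v)| ≤ shearErrorConst N H σ * (w ⬝ᵥ w + t ^ 2 * (u ⬝ᵥ u)) := by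
  set y := (pinv N * H) *ᵥ u
  have hsq (x : Fin n → ℝ) : 0 ≤ x ⬝ᵥ x := dotProduct_self_star_nonneg x
  have hvv : v ⬝ᵥ v ≤ 2 * (w ⬝ᵥ w + t ^ 2 * (y ⬝ᵥ y)) := by
    have hpar := hsq (w - t • y)
    rw [hv]
    simp only [dotProduct_add, add_dotProduct, dotProduct_sub, sub_dotProduct, dotProduct_smul,
      smul_dotProduct, smul_eq_mul] at hpar ⊢
    linarith
  have hyy : y ⬝ᵥ y ≤ ‖pinv N * H‖ ^ 2 * (u ⬝ᵥ u) := mulVec_dotProduct_mulVec_le _ u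
  calc |v ⬝ᵥ H *ᵥ v - σ * (v ⬝ᵥ v)| ≤ |v ⬝ᵥ H *ᵥ v| + |σ * (v ⬝ᵥ v)| := abs_sub _ _
    _ ≤ (‖H‖ + |σ|) * (v ⬝ᵥ v) := by
        rw [abs_mul, abs_of_nonneg (hsq v), add_mul]
        gcongr
        exact abs_dotProduct_mulVec_le H v
    _ ≤ (‖H‖ + |σ|) * (2 * (w ⬝ᵥ w + t ^ 2 * (‖pinv N * H‖ ^ 2 * (u ⬝ᵥ u)))) := by
        refine mul_le_mul_of_nonneg_left (hvv.trans ?_) (by positivity)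
        gcongr
    _ ≤ _ := by
      have hu := hsq u
      have hw := hsq w
      rw [shearErrorConst, mul_assoc 2, mul_left_comm _ 2, mul_assoc, mul_assoc]
      gcongr
      nlinarith [mul_nonneg (sq_nonneg ‖pinv N * H‖) hw, mul_nonneg (sq_nonneg t) hu]

theorem dotProduct_add_smul_mulVec (x : Fin n → ℝ) :
    x ⬝ᵥ (X + t • H) *ᵥ x =
      μ * (x ⬝ᵥ x) + t * (x ⬝ᵥ H *ᵥ x) - x ⬝ᵥ (μ • (1 : Matrix (Fin n) (Fin n) ℝ) - X) *ᵥ x := by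
  simp only [add_mulVec, sub_mulVec, smul_mulVec, one_mulVec, dotProduct_add, dotProduct_sub,
    dotProduct_smul, smul_eq_mul]
  ring

theorem le_quadForm_shear (hX : X.IsSymm) (hH : H.IsSymm)
    (hN : N = μ • (1 : Matrix (Fin n) (Fin n) ℝ) - X) (hu : N *ᵥ u = 0)
    (hw : kerProj N *ᵥ w = 0) (hv : v = w + t • (pinv N * H) *ᵥ u) (ht : 0 < t)
    (hgap : w ⬝ᵥ N *ᵥ w ≤ -g * (w ⬝ᵥ w))
    (hquad : (σ + ε * t) * (u ⬝ᵥ u) ≤ u ⬝ᵥ (H + t • (H * pinv N * H)) *ᵥ u)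
    (hg : t * shearErrorConst N H σ ≤ g) (hε : t * shearErrorConst N H σ ≤ ε) :
    (μ + t * σ) * ((u + v) ⬝ᵥ (u + v)) ≤ (u + v) ⬝ᵥ (X + t • H) *ᵥ (u + v) := by
  have hNsymm : N.IsSymm := hN ▸ (isSymm_one.smul μ).sub hX
  have heq := quadForm_shear_eq (σ := σ) hNsymm hH hu hw hv
  have herr := (abs_le.1 (abs_shear_error_le (σ := σ) hv)).1
  have hww : 0 ≤ w ⬝ᵥ w := dotProduct_self_star_nonneg w
  have huu : 0 ≤ u ⬝ᵥ u := dotProduct_self_star_nonneg u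
  rw [dotProduct_add_smul_mulVec (μ := μ), ← hN]
  nlinarith [mul_le_mul_of_nonneg_left herr ht.le, mul_le_mul_of_nonneg_left hquad ht.le,
    mul_le_mul_of_nonneg_right hg hww,
    mul_le_mul_of_nonneg_right hε (mul_nonneg (sq_nonneg t) huu)]

theorem quadForm_shear_le (hX : X.IsSymm) (hH : H.IsSymm)
    (hN : N = μ • (1 : Matrix (Fin n) (Fin n) ℝ) - X) (hu : N *ᵥ u = 0)
    (hw : kerProj N *ᵥ w = 0) (hv : v = w + t • (pinv N * H) *ᵥ u) (ht : 0 < t)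
    (hgap : g * (w ⬝ᵥ w) ≤ w ⬝ᵥ N *ᵥ w)
    (hquad : u ⬝ᵥ (H + t • (H * pinv N * H)) *ᵥ u ≤ (σ - ε * t) * (u ⬝ᵥ u))
    (hg : t * shearErrorConst N H σ ≤ g) (hε : t * shearErrorConst N H σ ≤ ε) :
    (u + v) ⬝ᵥ (X + t • H) *ᵥ (u + v) ≤ (μ + t * σ) * ((u + v) ⬝ᵥ (u + v)) := by
  have hNsymm : N.IsSymm := hN ▸ (isSymm_one.smul μ).sub hX
  have heq := quadForm_shear_eq (σ := σ) hNsymm hH hu hw hv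
  have herr := (abs_le.1 (abs_shear_error_le (σ := σ) hv)).2
  have hww : 0 ≤ w ⬝ᵥ w := dotProduct_self_star_nonneg w
  have huu : 0 ≤ u ⬝ᵥ u := dotProduct_self_star_nonneg u
  rw [dotProduct_add_smul_mulVec (μ := μ), ← hN]
  nlinarith [mul_le_mul_of_nonneg_left herr ht.le, mul_le_mul_of_nonneg_left hquad ht.le,
    mul_le_mul_of_nonneg_right hg hww,
    mul_le_mul_of_nonneg_right hε (mul_nonneg (sq_nonneg t) huu)]

/-- The unipotent change of variables `x ↦ x + t • pinv N * H * kerProj N * x`, which decouples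
the kernel of `N` from its orthogonal complement to second order in the form of `t • H - N`. -/
def shear (N H : Matrix (Fin n) (Fin n) ℝ) (t : ℝ) : Matrix (Fin n) (Fin n) ℝ :=
  1 + t • (pinv N * H * kerProj N)

theorem shear_mulVec (x : Fin n → ℝ) :
    shear N H t *ᵥ x = kerProj N *ᵥ x +
      (x - kerProj N *ᵥ x + t • (pinv N * H) *ᵥ kerProj N *ᵥ x) := by
  rw [shear, add_mulVec, one_mulVec, smul_mulVec, ← mulVec_mulVec]
  abel

theorem kerProj_mul_shear (hN : N.IsSymm) : kerProj N * shear N H t = kerProj N := by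
  rw [shear, mul_add, mul_one, Matrix.mul_smul, ← mul_assoc, ← mul_assoc, kerProj_mul_pinv hN,
    zero_mul, zero_mul, smul_zero, add_zero]

theorem finrank_map_shear (hN : N.IsSymm) (W : Submodule ℝ (Fin n → ℝ)) :
    Module.finrank ℝ (W.map (shear N H t).mulVecLin) = Module.finrank ℝ W := by
  have hinj : Function.Injective (shear N H t).mulVecLin := by
    refine (injective_iff_map_eq_zero _).2 fun x hx => ?_
    rw [mulVecLin_apply] at hx
    have hproj : kerProj N *ᵥ x = 0 := by
      rw [← kerProj_mul_shear (H := H) (t := t) hN, ← mulVec_mulVec, hx, mulVec_zero]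
    simpa only [shear_mulVec, hproj, mulVec_zero, smul_zero, sub_zero, add_zero, zero_add] using hx
  exact (Submodule.equivMapOfInjective _ hinj W).finrank_eq.symm

end SecondOrderExpansion

section EigenvalueEstimates

variable {n : ℕ} {X H U : Matrix (Fin n) (Fin n) ℝ} {i : Fin n} {u w : Fin n → ℝ} {t σ g ε : ℝ}

/-- The matrix `μ I - X`, where `μ` is the `i`-th largest eigenvalue of `X`; its kernel is the
eigenspace of `μ`. -/
def eigShift (X : Matrix (Fin n) (Fin n) ℝ) (i : Fin n) : Matrix (Fin n) (Fin n) ℝ :=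
  eigval X i • (1 : Matrix (Fin n) (Fin n) ℝ) - X

theorem isSymm_eigShift (hX : X.IsSymm) (i : Fin n) : (eigShift X i).IsSymm :=
  (isSymm_one.smul _).sub hX

theorem eigShift_eq_conj_diagonal (hU : U ∈ eigOrth X) (i : Fin n) :
    eigShift X i = U * diagonal (fun j => eigval X i - eigval X j) * Uᵀ := by
  have hdiag : diagonal (fun j => eigval X i - eigval X j) =
      eigval X i • (1 : Matrix (Fin n) (Fin n) ℝ) - diagonal (eigval X) := by
    rw [smul_one_eq_diagonal, diagonal_sub]
  rw [hdiag, mul_sub, sub_mul, ← hU.2, Matrix.mul_smul, mul_one, Matrix.smul_mul, hU.1,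
    eigShift]

theorem kerProj_eigShift_mulVec_eq_zero (hU : U ∈ eigOrth X)
    (hlead : ∀ j < i, eigval X i < eigval X j) (hw : w ∈ coordAnnihilator U (Finset.Ici i)) :
    kerProj (eigShift X i) *ᵥ w = 0 := by
  have hcoord : Uᵀ *ᵥ kerProj (eigShift X i) *ᵥ w = 0 := by
    ext j
    rw [coord_kerProj_mulVec hU.1 (eigShift_eq_conj_diagonal hU i)]
    split_ifs with hj
    · refine mem_coordAnnihilator.1 hw j (Finset.mem_Ici.2 (not_lt.1 fun hji => ?_))
      linarith [hlead j hji]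
    · rfl
  rw [← one_mulVec (kerProj _ *ᵥ w), ← hU.1, ← mulVec_mulVec, hcoord, mulVec_zero]

theorem le_eigval_add_smul (hX : X.IsSymm) (hH : H.IsSymm) (hg0 : 0 < g)
    (hgap : ∀ j < i, g ≤ eigval X j - eigval X i) (ht : 0 < t)
    (hu : eigShift X i *ᵥ u = 0) (hu0 : u ≠ 0)
    (hquad : (σ + ε * t) * (u ⬝ᵥ u) ≤ u ⬝ᵥ (H + t • (H * pinv (eigShift X i) * H)) *ᵥ u)
    (hg : t * shearErrorConst (eigShift X i) H σ ≤ g)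
    (hε : t * shearErrorConst (eigShift X i) H σ ≤ ε) :
    eigval X i + t * σ ≤ eigval (X + t • H) i := by
  obtain ⟨U, hU⟩ := eigOrth_nonempty hX
  have hN := isSymm_eigShift hX i
  have hPu := kerProj_mulVec_eq_self hN hu
  have hPC {w} : w ∈ coordAnnihilator U (Finset.Ici i) → kerProj (eigShift X i) *ᵥ w = 0 :=
    kerProj_eigShift_mulVec_eq_zero hU fun j hj => by linarith [hgap j hj]
  have hrank : (i : ℕ) < Module.finrank ℝ ((coordAnnihilator U (Finset.Ici i) ⊔ ℝ ∙ u).map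
      (shear (eigShift X i) H t).mulVecLin) := by
    have hcard := card_le_finrank_coordAnnihilator_add_card (U := U) (s := Finset.Ici i)
    have hlt := Submodule.finrank_lt_finrank_of_lt <|
      Submodule.lt_sup_iff_notMem.2 fun huC => hu0 (hPu.symm.trans (hPC huC))
    rw [Fintype.card_fin, Fin.card_Ici] at hcard
    rw [finrank_map_shear hN]
    lia
  refine le_eigval_of_finrank (hX.add (hH.smul t)) hrank ?_
  rintro _ ⟨x, hx, rfl⟩
  obtain ⟨w, hw, y, hy, rfl⟩ := Submodule.mem_sup.1 hx
  obtain ⟨a, rfl⟩ := Submodule.mem_span_singleton.1 hy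
  have hproj : kerProj (eigShift X i) *ᵥ (w + a • u) = a • u := by
    rw [mulVec_add, mulVec_smul, hPC hw, hPu, zero_add]
  rw [mulVecLin_apply, shear_mulVec, hproj, add_sub_cancel_right]
  refine le_quadForm_shear (N := eigShift X i) hX hH rfl ?_ (hPC hw) rfl ht ?_ ?_ hg hε
  · rw [mulVec_smul, hu, smul_zero]
  · rw [eigShift_eq_conj_diagonal hU]
    exact dotProduct_conj_diagonal_mulVec_le hU.1 hw fun j hj => by
      linarith [hgap j (by simpa using hj)]
  · simp only [mulVec_smul, dotProduct_smul, smul_dotProduct, smul_eq_mul]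
    nlinarith [mul_le_mul_of_nonneg_left hquad (mul_self_nonneg a)]

theorem sub_kerProj_mulVec_mem_coordAnnihilator (hU : U ∈ eigOrth X)
    (hw : w ∈ coordAnnihilator U (Finset.Iio i)) :
    w - kerProj (eigShift X i) *ᵥ w ∈ coordAnnihilator U {j | eigval X i ≤ eigval X j} := by
  refine mem_coordAnnihilator.2 fun j hj => ?_
  rw [mulVec_sub, Pi.sub_apply, coord_kerProj_mulVec hU.1 (eigShift_eq_conj_diagonal hU i)]
  split_ifs with heq
  · exact sub_self _
  · have hlt : eigval X i < eigval X j :=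
      lt_of_le_of_ne (Finset.mem_filter_univ j |>.1 hj) (sub_ne_zero.1 heq)
    have hji : j < i := lt_of_not_ge fun hij => hlt.not_ge (eigval_antitone X hij)
    rw [mem_coordAnnihilator.1 hw j (Finset.mem_Iio.2 hji), sub_zero]

theorem mul_dotProduct_self_le_eigShift (hU : U ∈ eigOrth X)
    (hgap : ∀ j, eigval X j < eigval X i → g ≤ eigval X i - eigval X j)
    (hw : w ∈ coordAnnihilator U {j | eigval X i ≤ eigval X j}) :
    g * (w ⬝ᵥ w) ≤ w ⬝ᵥ eigShift X i *ᵥ w := by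
  rw [eigShift_eq_conj_diagonal hU]
  exact le_dotProduct_conj_diagonal_mulVec hU.1 hw fun j hj =>
    hgap j (not_le.1 fun hle => hj (Finset.mem_filter_univ j |>.2 hle))

theorem eigval_add_smul_le (hX : X.IsSymm) (hH : H.IsSymm)
    (hgap : ∀ j, eigval X j < eigval X i → g ≤ eigval X i - eigval X j) (ht : 0 < t)
    (hquad : ∀ u, eigShift X i *ᵥ u = 0 →
      u ⬝ᵥ (H + t • (H * pinv (eigShift X i) * H)) *ᵥ u ≤ (σ - ε * t) * (u ⬝ᵥ u))
    (hg : t * shearErrorConst (eigShift X i) H σ ≤ g)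
    (hε : t * shearErrorConst (eigShift X i) H σ ≤ ε) :
    eigval (X + t • H) i ≤ eigval X i + t * σ := by
  obtain ⟨U, hU⟩ := eigOrth_nonempty hX
  have hN := isSymm_eigShift hX i
  have hrank : n ≤ Module.finrank ℝ ((coordAnnihilator U (Finset.Iio i)).map
      (shear (eigShift X i) H t).mulVecLin) + i := by
    rw [finrank_map_shear hN]
    simpa using card_le_finrank_coordAnnihilator_add_card (U := U) (s := Finset.Iio i)
  refine eigval_le_of_finrank (hX.add (hH.smul t)) hrank ?_
  rintro _ ⟨x, hx, rfl⟩
  have hker : eigShift X i *ᵥ kerProj (eigShift X i) *ᵥ x = 0 := by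
    rw [mulVec_mulVec, mul_kerProj hN, zero_mulVec]
  rw [mulVecLin_apply, shear_mulVec]
  refine quadForm_shear_le (N := eigShift X i) hX hH rfl hker ?_ rfl ht
    (mul_dotProduct_self_le_eigShift hU hgap (sub_kerProj_mulVec_mem_coordAnnihilator hU hx))
    (hquad _ hker) hg hε
  rw [mulVec_sub, kerProj_mulVec_eq_self hN hker, sub_self]

end EigenvalueEstimates

section EventualEstimates

open scoped Matrix.Norms.L2Operator

theorem exists_pos_forall_le_of_forall_pos {ι : Type*} [Finite ι] {p : ι → Prop} {d : ι → ℝ}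
    (hd : ∀ j, p j → 0 < d j) : ∃ g > 0, ∀ j, p j → g ≤ d j := by
  have hev : ∀ᶠ g : ℝ in 𝓝[>] 0, ∀ j, p j → g ≤ d j := by
    refine eventually_all.2 fun j => eventually_imp_distrib_left.2 fun hj => ?_
    exact nhdsWithin_le_nhds (eventually_le_nhds (hd j hj))
  exact (hev.and self_mem_nhdsWithin).exists.imp fun g hg => ⟨hg.2, hg.1⟩

variable {n : ℕ} {X N H : Matrix (Fin n) (Fin n) ℝ} {i : Fin n}
  {α : Type*} {l : Filter α} {τ σ : α → ℝ} {M : α → Matrix (Fin n) (Fin n) ℝ} {s ε : ℝ}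

theorem abs_rayleighQuotient_le {ι : Type*} [Fintype ι] [DecidableEq ι] (A : Matrix ι ι ℝ)
    (x : ι → ℝ) : |x ⬝ᵥ A *ᵥ x / (x ⬝ᵥ x)| ≤ ‖A‖ := by
  have hx : 0 ≤ x ⬝ᵥ x := dotProduct_self_star_nonneg x
  rw [abs_div, abs_of_nonneg hx]
  exact div_le_of_le_mul₀ hx (norm_nonneg A) (abs_dotProduct_mulVec_le A x)

theorem shearErrorConst_le_shearErrorConst {a b : ℝ} (hab : |a| ≤ |b|) :
    shearErrorConst N H a ≤ shearErrorConst N H b := by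
  unfold shearErrorConst
  gcongr

theorem continuous_shearErrorConst (N : Matrix (Fin n) (Fin n) ℝ) :
    Continuous fun p : Matrix (Fin n) (Fin n) ℝ × ℝ => shearErrorConst N p.1 p.2 := by
  unfold shearErrorConst
  fun_prop

theorem eventually_mul_shearErrorConst_le {g : ℝ} (hg : 0 < g) (hτ : Tendsto τ l (𝓝 0))
    (hM : Tendsto M l (𝓝 H)) (hσ : Tendsto σ l (𝓝 s)) :
    ∀ᶠ a in l, τ a * shearErrorConst N (M a) (σ a) ≤ g := by
  have hlim := hτ.mul (((continuous_shearErrorConst N).tendsto (H, s)).comp (hM.prodMk_nhds hσ))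
  rw [zero_mul] at hlim
  exact hlim.eventually (eventually_le_nhds hg)

theorem eventually_quadForm_le_eigval_sub (hX : X.IsSymm) (hlead : ∀ j < i, eigval X i < eigval X j)
    (hτ : Tendsto τ l (𝓝[>] 0)) (hMsymm : ∀ a, (M a).IsSymm) (hM : Tendsto M l (𝓝 H))
    (hε : 0 < ε) :
    ∀ᶠ a in l, ∀ u, eigShift X i *ᵥ u = 0 →
      u ⬝ᵥ (τ a • M a + τ a ^ 2 • (M a * pinv (eigShift X i) * M a)) *ᵥ u ≤
        (eigval (X + τ a • M a) i - eigval X i + ε * τ a ^ 2) * (u ⬝ᵥ u) := by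
  set G := pinv (eigShift X i)
  obtain ⟨g, hg0, hgap⟩ := exists_pos_forall_le_of_forall_pos (p := (· < i))
    (d := fun j => eigval X j - eigval X i) fun j hj => sub_pos.2 (hlead j hj)
  have hτ0 : Tendsto τ l (𝓝 0) := hτ.mono_right nhdsWithin_le_nhds
  have hbound : Tendsto (fun a => ‖M a + τ a • (M a * G * M a)‖ + ε * τ a) l
      (𝓝 (‖H + (0 : ℝ) • (H * G * H)‖ + ε * 0)) :=
    (hM.add (hτ0.smul ((hM.mul_const G).mul hM))).norm.add (hτ0.const_mul ε)
  filter_upwards [hτ.eventually self_mem_nhdsWithin,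
    eventually_mul_shearErrorConst_le (N := eigShift X i) hg0 hτ0 hM hbound,
    eventually_mul_shearErrorConst_le (N := eigShift X i) hε hτ0 hM hbound]
    with a (hτa : 0 < τ a) hga hεa u hu
  rcases eq_or_ne u 0 with rfl | hu0
  · simp
  have huu : 0 < u ⬝ᵥ u := dotProduct_self_star_pos_iff.2 hu0
  set q := u ⬝ᵥ (M a + τ a • (M a * G * M a)) *ᵥ u with hq
  have hσ : |q / (u ⬝ᵥ u) - ε * τ a| ≤ |‖M a + τ a • (M a * G * M a)‖ + ε * τ a| :=
    calc _ ≤ |q / (u ⬝ᵥ u)| + |ε * τ a| := abs_sub _ _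
      _ ≤ ‖M a + τ a • (M a * G * M a)‖ + ε * τ a :=
        add_le_add (abs_rayleighQuotient_le _ u) (abs_of_pos (mul_pos hε hτa)).le
      _ ≤ _ := le_abs_self _
  have hle := mul_le_mul_of_nonneg_left
    (shearErrorConst_le_shearErrorConst (N := eigShift X i) (H := M a) hσ) hτa.le
  have hquad : (q / (u ⬝ᵥ u) - ε * τ a + ε * τ a) * (u ⬝ᵥ u) ≤ q := by
    rw [sub_add_cancel, div_mul_cancel₀ _ huu.ne']
  have heig := le_eigval_add_smul hX (hMsymm a) hg0 hgap hτa hu hu0 hquad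
    (hle.trans hga) (hle.trans hεa)
  have hscale : u ⬝ᵥ (τ a • M a + τ a ^ 2 • (M a * G * M a)) *ᵥ u = τ a * q := by
    rw [hq, pow_two, mul_smul, ← smul_add, smul_mulVec, dotProduct_smul, smul_eq_mul]
  rw [hscale]
  calc τ a * q = (τ a * (q / (u ⬝ᵥ u) - ε * τ a) + ε * τ a ^ 2) * (u ⬝ᵥ u) := by
        field_simp
        ring
    _ ≤ _ := by
        gcongr
        linarith

theorem eventually_eigval_add_smul_le (hX : X.IsSymm) (hτ : Tendsto τ l (𝓝[>] 0))
    (hMsymm : ∀ a, (M a).IsSymm) (hM : Tendsto M l (𝓝 H)) (hσ : Tendsto σ l (𝓝 s))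
    (hquad : ∀ᶠ a in l, ∀ u, eigShift X i *ᵥ u = 0 →
      u ⬝ᵥ (M a + τ a • (M a * pinv (eigShift X i) * M a)) *ᵥ u ≤ σ a * (u ⬝ᵥ u))
    (hε : 0 < ε) :
    ∀ᶠ a in l, eigval (X + τ a • M a) i ≤ eigval X i + τ a * σ a + ε * τ a ^ 2 := by
  obtain ⟨g, hg0, hgap⟩ := exists_pos_forall_le_of_forall_pos
    (p := fun j => eigval X j < eigval X i) fun j hj => sub_pos.2 hj
  have hτ0 : Tendsto τ l (𝓝 0) := hτ.mono_right nhdsWithin_le_nhds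
  have hσ' : Tendsto (fun a => σ a + ε * τ a) l (𝓝 (s + ε * 0)) := hσ.add (hτ0.const_mul ε)
  filter_upwards [hquad, hτ.eventually self_mem_nhdsWithin,
    eventually_mul_shearErrorConst_le (N := eigShift X i) hg0 hτ0 hM hσ',
    eventually_mul_shearErrorConst_le (N := eigShift X i) hε hτ0 hM hσ']
    with a hquad_a hτa hga hεa
  have heig := eigval_add_smul_le hX (hMsymm a) hgap hτa
    (by simpa only [add_sub_cancel_right] using hquad_a) hga hεa
  linarith

theorem eventually_eigval_add_smul_le_first_order (hX : X.IsSymm) (hH : H.IsSymm)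
    (hquad : ∀ u, eigShift X i *ᵥ u = 0 → u ⬝ᵥ H *ᵥ u ≤ s * (u ⬝ᵥ u)) (hε : 0 < ε) :
    ∀ᶠ t : ℝ in 𝓝[>] 0, eigval (X + t • H) i ≤ eigval X i + t * (s + ε) := by
  set C := ‖H * pinv (eigShift X i) * H‖
  have ht0 : Tendsto (id : ℝ → ℝ) (𝓝[>] 0) (𝓝 0) := nhdsWithin_le_nhds
  have hquad' : ∀ᶠ t : ℝ in 𝓝[>] 0, ∀ u, eigShift X i *ᵥ u = 0 →
      u ⬝ᵥ (H + t • (H * pinv (eigShift X i) * H)) *ᵥ u ≤ (s + t * C) * (u ⬝ᵥ u) := by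
    filter_upwards [self_mem_nhdsWithin] with t (ht : 0 < t) u hu
    have hC := (le_abs_self _).trans (abs_dotProduct_mulVec_le (H * pinv (eigShift X i) * H) u)
    rw [add_mulVec, dotProduct_add, smul_mulVec, dotProduct_smul, smul_eq_mul]
    linarith [hquad u hu, mul_le_mul_of_nonneg_left hC ht.le]
  have hsmall : ∀ᶠ t : ℝ in 𝓝[>] 0, t * (C + 1) ≤ ε :=
    (ht0.mul_const (C + 1)).eventually (eventually_le_nhds (by simpa))
  filter_upwards [eventually_eigval_add_smul_le hX tendsto_id (fun _ => hH) tendsto_const_nhds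
    (tendsto_const_nhds.add (ht0.mul_const C)) hquad' one_pos, hsmall, self_mem_nhdsWithin]
    with t heig hε_t (ht : 0 < t)
  simp only [id_eq] at heig
  nlinarith

end EventualEstimates

section EigenspaceDensity

open scoped MatrixOrder Matrix.Norms.L2Operator

variable {n : ℕ} {X Y N M : Matrix (Fin n) (Fin n) ℝ} {μ c : ℝ}

/-- `Y` is a density matrix carried by the `μ`-eigenspace of `X`: positive semidefinite, of unit
trace, and with range in that eigenspace. For `μ` the `i`-th largest eigenvalue of `X`, all limiting
subgradients of that eigenvalue at `X` are of this form. -/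
structure IsEigenspaceDensity (X Y : Matrix (Fin n) (Fin n) ℝ) (μ : ℝ) : Prop where
  posSemidef : Y.PosSemidef
  trace_eq_one : Y.trace = 1
  sub_mul_eq_zero : (μ • (1 : Matrix (Fin n) (Fin n) ℝ) - X) * Y = 0

theorem isClosed_setOf_posSemidef {ι : Type*} [Finite ι] :
    IsClosed {A : Matrix ι ι ℝ | A.PosSemidef} := by
  have := Fintype.ofFinite ι
  have hset : {A : Matrix ι ι ℝ | A.PosSemidef} =
      {A | Aᴴ = A} ∩ ⋂ x : ι → ℝ, {A | 0 ≤ star x ⬝ᵥ A *ᵥ x} := by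
    ext A
    simp only [Set.mem_inter_iff, Set.mem_iInter]
    exact posSemidef_iff_dotProduct_mulVec
  rw [hset]
  exact (isClosed_eq (by fun_prop) (by fun_prop)).inter <|
    isClosed_iInter fun x => isClosed_le (by fun_prop) (by fun_prop)

theorem isClosed_setOf_isEigenspaceDensity :
    IsClosed {p : Matrix (Fin n) (Fin n) ℝ × Matrix (Fin n) (Fin n) ℝ × ℝ |
      IsEigenspaceDensity p.1 p.2.1 p.2.2} := by
  have hset : {p : Matrix (Fin n) (Fin n) ℝ × Matrix (Fin n) (Fin n) ℝ × ℝ |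
      IsEigenspaceDensity p.1 p.2.1 p.2.2} =
      {p | p.2.1.PosSemidef} ∩ ({p | p.2.1.trace = 1} ∩
        {p | (p.2.2 • (1 : Matrix (Fin n) (Fin n) ℝ) - p.1) * p.2.1 = 0}) :=
    Set.ext fun p => ⟨fun h => ⟨h.1, h.2, h.3⟩, fun h => ⟨h.1, h.2.1, h.2.2⟩⟩
  rw [hset]
  exact (isClosed_setOf_posSemidef.preimage (by fun_prop)).inter <|
    (isClosed_eq (by fun_prop) (by fun_prop)).inter (isClosed_eq (by fun_prop) (by fun_prop))

theorem exists_eq_transpose_mul_self_of_mul_eq_zero (hY : Y.PosSemidef) (hN : N.IsSymm)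
    (hNY : N * Y = 0) : ∃ C, Y = Cᵀ * C ∧ N * Cᵀ = 0 := by
  obtain ⟨B, hB⟩ := CStarAlgebra.nonneg_iff_eq_star_mul_self.1 hY.nonneg
  rw [star_eq_conjTranspose, conjTranspose_eq_transpose_of_trivial] at hB
  have hPY : kerProj N * Y = Y := kerProj_mul_eq_self hN hNY
  have hYP : Y * kerProj N = Y := mul_kerProj_eq_self hN hY.1 hNY
  refine ⟨B * kerProj N, ?_, ?_⟩
  · rw [transpose_mul, (isSymm_kerProj hN).eq, mul_assoc, ← mul_assoc Bᵀ, ← hB, hYP, hPY]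
  · rw [transpose_mul, (isSymm_kerProj hN).eq, ← mul_assoc, mul_kerProj hN, zero_mul]

theorem trace_transpose_mul_self_mul {ι : Type*} [Fintype ι] (C M : Matrix ι ι ℝ) :
    (Cᵀ * C * M).trace = ∑ j, C j ⬝ᵥ M *ᵥ C j := by
  rw [mul_assoc, trace_mul_comm]
  exact Finset.sum_congr rfl fun j _ => mul_mul_apply C M Cᵀ j j

theorem IsEigenspaceDensity.trace_mul_le (hY : IsEigenspaceDensity X Y μ) (hX : X.IsSymm)
    (hM : ∀ u, (μ • (1 : Matrix (Fin n) (Fin n) ℝ) - X) *ᵥ u = 0 → u ⬝ᵥ M *ᵥ u ≤ c * (u ⬝ᵥ u)) :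
    (Y * M).trace ≤ c := by
  obtain ⟨C, rfl, hC⟩ := exists_eq_transpose_mul_self_of_mul_eq_zero hY.posSemidef
    ((isSymm_one.smul μ).sub hX) hY.sub_mul_eq_zero
  have hone := trace_transpose_mul_self_mul C 1
  simp only [mul_one, hY.trace_eq_one, one_mulVec] at hone
  rw [trace_transpose_mul_self_mul, ← mul_one c, hone, Finset.mul_sum]
  exact Finset.sum_le_sum fun j _ => hM _ (funext fun k => congrFun₂ hC k j)

theorem mul_eq_zero_of_posSemidef_of_trace_nonpos (hY : Y.PosSemidef) (hN : N.IsSymm)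
    (htr : (Y * (N * N)).trace ≤ 0) : N * Y = 0 := by
  obtain ⟨B, hB⟩ := CStarAlgebra.nonneg_iff_eq_star_mul_self.1 hY.nonneg
  rw [star_eq_conjTranspose] at hB
  have hNh : Nᴴ = N := hN
  have hBN : B * N = 0 := by
    rw [← trace_conjTranspose_mul_self_eq_zero_iff]
    refine le_antisymm (htr.trans_eq' ?_) (posSemidef_conjTranspose_mul_self _).trace_nonneg
    rw [conjTranspose_mul, hNh, ← mul_assoc (N * Bᴴ), mul_assoc N, ← hB, ← mul_assoc Y,
      trace_mul_comm (Y * N), mul_assoc N]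
  rw [hB, ← hNh, ← mul_assoc, ← conjTranspose_mul, hBN, conjTranspose_zero, zero_mul]

end EigenspaceDensity

section Subgradients

variable {n : ℕ} {X Y D : Sym n} {i : Fin n} {c : ℝ}

theorem isBilinearMap_ipM : IsBilinearMap ℝ (ipM (n := n)) where
  add_left A B C := by simp [ipM, add_mul]
  smul_left r A B := by simp [ipM]
  add_right A B C := by simp [ipM, mul_add]
  smul_right r A B := by simp [ipM]

theorem ipM_self_pos (hD : D ≠ 0) : 0 < ipM D D := by
  have hherm : (D : Matrix (Fin n) (Fin n) ℝ)ᴴ = D := D.2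
  have heq : ipM D D = ((D : Matrix (Fin n) (Fin n) ℝ)ᴴ * D).trace := by rw [hherm, ipM]
  rw [heq]
  refine (posSemidef_conjTranspose_mul_self D.val).trace_nonneg.lt_of_ne' ?_
  rw [Ne, trace_conjTranspose_mul_self_eq_zero_iff]
  exact fun h => hD (Subtype.ext h)

theorem ipM_le_of_regSubgrad_eigval
    (hY : RegSubgrad ipM (fun A : Sym n => ((eigval A.val i : ℝ) : EReal)) X Y)
    (hD : ∀ u, eigShift X.val i *ᵥ u = 0 → u ⬝ᵥ D.val *ᵥ u ≤ c * (u ⬝ᵥ u)) : ipM Y D ≤ c :=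
  le_of_forall_pos_le_add fun _ hε =>
    hY.ip_le_of_eventually_le (F := fun A : Sym n => eigval A.val i) isBilinearMap_ipM
      ipM_self_pos (eventually_eigval_add_smul_le_first_order X.2 D.2 hD hε)

theorem isEigenspaceDensity_of_regSubgrad_eigval
    (hY : RegSubgrad ipM (fun A : Sym n => ((eigval A.val i : ℝ) : EReal)) X Y) :
    IsEigenspaceDensity X.val Y.val (eigval X.val i) := by
  have htest {D : Matrix (Fin n) (Fin n) ℝ} {c : ℝ} (hD : D.IsSymm)
      (hc : ∀ u, eigShift X.val i *ᵥ u = 0 → u ⬝ᵥ D *ᵥ u ≤ c * (u ⬝ᵥ u)) :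
      (Y.val * D).trace ≤ c := ipM_le_of_regSubgrad_eigval (D := ⟨D, hD⟩) hY hc
  have hpos : Y.val.PosSemidef := by
    refine .of_dotProduct_mulVec_nonneg Y.2 fun x => ?_
    have hx := htest (D := -vecMulVec x x) (c := 0) (by simp [IsSymm, transpose_vecMulVec])
      fun u _ => by
        rw [neg_mulVec, vecMulVec_mulVec, dotProduct_neg, dotProduct_smul, dotProduct_comm u x]
        simpa using mul_self_nonneg (x ⬝ᵥ u)
    rwa [mul_neg, trace_neg, mul_vecMulVec, trace_vecMulVec, neg_nonpos, dotProduct_comm] at hx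
  refine ⟨hpos, le_antisymm ?_ ?_, ?_⟩
  · simpa using htest (D := 1) (c := 1) isSymm_one fun u _ => by simp
  · simpa using htest (D := -1) (c := -1) isSymm_one.neg fun u _ => by simp [neg_mulVec]
  · have hN := isSymm_eigShift X.2 i
    refine mul_eq_zero_of_posSemidef_of_trace_nonpos (N := eigShift X.val i) hpos hN
      (htest ?_ fun u hu => ?_)
    · rw [IsSymm, transpose_mul, hN.eq]
    · rw [← mulVec_mulVec, hu, mulVec_zero, dotProduct_zero, zero_mul]

theorem isEigenspaceDensity_of_limSubgrad_eigval
    (hY : LimSubgrad ipM (fun A : Sym n => ((eigval A.val i : ℝ) : EReal)) X Y) :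
    IsEigenspaceDensity X.val Y.val (eigval X.val i) := by
  obtain ⟨Xs, Ys, hreg, hXs, hYs, heig⟩ := hY
  have hval := continuous_subtype_val (p := (· ∈ symSubmodule n))
  have hlim := ((hval.tendsto X).comp hXs).prodMk_nhds
    (((hval.tendsto Y).comp hYs).prodMk_nhds (EReal.tendsto_coe.1 heig))
  exact isClosed_setOf_isEigenspaceDensity.mem_of_tendsto hlim <|
    .of_forall fun k => isEigenspaceDensity_of_regSubgrad_eigval (hreg k)

end Subgradients

section KernelCompression

variable {n : ℕ} {N A X Y H : Matrix (Fin n) (Fin n) ℝ} {u : Fin n → ℝ} {i : Fin n}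
  {s ε : ℝ}

/-- The compression of `A` to the kernel of the symmetric matrix `N`, extended by zero to the
orthogonal complement of that kernel. -/
def kerCompression (N A : Matrix (Fin n) (Fin n) ℝ) : Matrix (Fin n) (Fin n) ℝ :=
  kerProj N * A * kerProj N

theorem isSymm_kerCompression (hN : N.IsSymm) (hA : A.IsSymm) : (kerCompression N A).IsSymm := by
  rw [IsSymm, kerCompression, transpose_mul, transpose_mul, (isSymm_kerProj hN).eq, hA.eq,
    mul_assoc]

theorem trace_mul_kerCompression (hN : N.IsSymm) (hY : Y.IsSymm) (hNY : N * Y = 0) :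
    (Y * kerCompression N A).trace = (Y * A).trace := by
  rw [kerCompression, ← mul_assoc, ← mul_assoc, mul_kerProj_eq_self hN hY hNY, trace_mul_comm,
    ← mul_assoc, kerProj_mul_eq_self hN hNY]

theorem dotProduct_kerCompression_mulVec (hN : N.IsSymm) (hu : N *ᵥ u = 0) :
    u ⬝ᵥ kerCompression N A *ᵥ u = u ⬝ᵥ A *ᵥ u := by
  have hPu := kerProj_mulVec_eq_self hN hu
  rw [kerCompression, ← mulVec_mulVec, ← mulVec_mulVec, hPu, dotProduct_mulVec, ← mulVec_transpose,
    (isSymm_kerProj hN).eq, hPu]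

theorem isSymm_mul_pinv_mul (hN : N.IsSymm) (hH : H.IsSymm) : (H * pinv N * H).IsSymm := by
  rw [IsSymm, transpose_mul, transpose_mul, (isSymm_pinv hN).eq, hH.eq, mul_assoc]

theorem sub_kerCompression_mul_pinv_mul_sub_kerCompression (hN : N.IsSymm) (t : ℝ) :
    (H - t • kerCompression N A) * pinv N * (H - t • kerCompression N A) = H * pinv N * H := by
  have hleft : kerCompression N A * pinv N = 0 := by
    rw [kerCompression, mul_assoc, kerProj_mul_pinv hN, mul_zero]
  have hright : pinv N * kerCompression N A = 0 := by
    rw [kerCompression, ← mul_assoc, ← mul_assoc, pinv_mul_kerProj hN, zero_mul, zero_mul]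
  rw [sub_mul, Matrix.smul_mul, hleft, smul_zero, sub_zero, mul_sub, Matrix.mul_smul,
    mul_assoc H (pinv N) (kerCompression N A), hright, mul_zero, smul_zero, sub_zero]

theorem eventually_eigval_add_smul_sub_kerCompression_le
    (hX : X.IsSymm) (hH : H.IsSymm)
    (hquad : ∀ u, eigShift X i *ᵥ u = 0 → u ⬝ᵥ H *ᵥ u ≤ s * (u ⬝ᵥ u)) (hε : 0 < ε) :
    ∀ᶠ t : ℝ in 𝓝[>] 0,
      eigval (X + t • (H - t • kerCompression (eigShift X i) (H * pinv (eigShift X i) * H))) i ≤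
        eigval X i + t * s + ε * t ^ 2 := by
  have hN := isSymm_eigShift hX i
  set K := kerCompression (eigShift X i) (H * pinv (eigShift X i) * H) with hK
  have hcont : Continuous fun t : ℝ => H - t • K := by fun_prop
  refine eventually_eigval_add_smul_le hX tendsto_id
    (fun t => hH.sub ((isSymm_kerCompression hN (isSymm_mul_pinv_mul hN hH)).smul t))
    ((hcont.tendsto 0).mono_left nhdsWithin_le_nhds) tendsto_const_nhds
    (.of_forall fun t u hu => ?_) hε
  rw [hK, sub_kerCompression_mul_pinv_mul_sub_kerCompression hN, add_mulVec, sub_mulVec,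
    smul_mulVec, smul_mulVec, dotProduct_add, dotProduct_sub, dotProduct_smul, dotProduct_smul,
    dotProduct_kerCompression_mulVec hN hu, sub_add_cancel]
  exact hquad u hu

end KernelCompression

section LeadingEigenvalue

variable {n : ℕ} {X Y H : Sym n} {i : Fin n} {u : Fin n → ℝ} {ε : ℝ}

theorem tendsto_val_snd_nhdsGT_prod (H : Sym n) :
    Tendsto (fun p : ℝ × Sym n => p.2.val) (𝓝[>] 0 ×ˢ 𝓝 H) (𝓝 H.val) :=
  (continuous_subtype_val.tendsto H).comp tendsto_snd

theorem eventually_le_eigval_add_smul_of_isEigenspaceDensity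
    (hY : IsEigenspaceDensity X.val Y.val (eigval X.val i))
    (hlead : ∀ j < i, eigval X.val i < eigval X.val j) (H : Sym n) (hε : 0 < ε) :
    ∀ᶠ p : ℝ × Sym n in 𝓝[>] 0 ×ˢ 𝓝 H,
      eigval X.val i + p.1 * ipM Y p.2 +
        p.1 ^ 2 * (Y.val * (p.2.val * pinv (eigShift X.val i) * p.2.val)).trace - ε * p.1 ^ 2 ≤
      eigval (X + p.1 • p.2).val i := by
  filter_upwards [eventually_quadForm_le_eigval_sub X.2 hlead tendsto_fst (fun p => p.2.2)
    (tendsto_val_snd_nhdsGT_prod H) hε] with p hp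
  have htrace := hY.trace_mul_le X.2 hp
  rw [mul_add, Matrix.mul_smul, Matrix.mul_smul, trace_add, trace_smul, trace_smul] at htrace
  simp only [smul_eq_mul] at htrace
  change _ ≤ eigval (X.val + p.1 • p.2.val) i
  rw [ipM]
  linarith

theorem dotProduct_mulVec_le_of_mem_criticalCone
    (hlead : ∀ j < i, eigval X.val i < eigval X.val j)
    (hH : H ∈ criticalCone ipM (fun A : Sym n => ((eigval A.val i : ℝ) : EReal)) X Y)
    (hu : eigShift X.val i *ᵥ u = 0) : u ⬝ᵥ H.val *ᵥ u ≤ ipM Y H * (u ⬝ᵥ u) := by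
  rcases eq_or_ne u 0 with rfl | hu0
  · simp
  have huu : 0 < u ⬝ᵥ u := dotProduct_self_star_pos_iff.2 hu0
  set G := pinv (eigShift X.val i)
  rw [← div_le_iff₀ huu, ← EReal.coe_le_coe_iff, ← hH]
  refine le_subderiv_of_eventually (F := fun A : Sym n => eigval A.val i) (φ := fun p =>
    u ⬝ᵥ (p.2.val + p.1 • (p.2.val * G * p.2.val)) *ᵥ u / (u ⬝ᵥ u) - p.1) ?_ ?_
  · have hcont : Continuous fun p : ℝ × Sym n =>
        u ⬝ᵥ (p.2.val + p.1 • (p.2.val * G * p.2.val)) *ᵥ u / (u ⬝ᵥ u) - p.1 := by fun_prop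
    simpa using tendsto_nhdsGT_zero_prod_of_continuous hcont H
  · filter_upwards [eventually_quadForm_le_eigval_sub X.2 hlead tendsto_fst (fun p => p.2.2)
      (tendsto_val_snd_nhdsGT_prod H) one_pos] with p hp
    have hpu := (div_le_iff₀ huu).2 (hp u hu)
    rw [pow_two, mul_smul, ← smul_add, smul_mulVec, dotProduct_smul, smul_eq_mul,
      mul_div_assoc] at hpu
    change _ ≤ eigval (X.val + p.1 • p.2.val) i
    linarith

end LeadingEigenvalue

open scoped Classical in
/-- Theorem 5.3: a leading eigenvalue function is twice epi-differentiable,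
with second subderivative `δ_{C}(H) + 2⟨Y, H (μ I - X)† H⟩`. -/
theorem leading_eigenvalue_twice_epi_diff {n : ℕ} (X : Sym n) (i : Fin n)
    (hlead : ∀ j : Fin n, j < i → eigval X.val i < eigval X.val j) :
    ∀ Y : Sym n, LimSubgrad ipM (fun A : Sym n => ((eigval A.val i : ℝ) : EReal)) X Y →
      TwiceEpiDiff ipM (fun A : Sym n => ((eigval A.val i : ℝ) : EReal)) X Y ∧
      ∀ H : Sym n,
        subderiv2 ipM (fun A : Sym n => ((eigval A.val i : ℝ) : EReal)) X Y H =
          (if H ∈ criticalCone ipM (fun A : Sym n => ((eigval A.val i : ℝ) : EReal)) X Y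
            then (0 : EReal) else (⊤ : EReal))
          + ((2 * (Y.val * (H.val *
              pinv (eigval X.val i • (1 : Matrix (Fin n) (Fin n) ℝ) - X.val) * H.val)).trace
              : ℝ) : EReal) := by
  intro Y hY
  have hdensity := isEigenspaceDensity_of_limSubgrad_eigval hY
  have hN := isSymm_eigShift X.2 i
  refine twiceEpiDiff_and_subderiv2_eq_indicator_add (F := fun A : Sym n => eigval A.val i)
    (Q := fun H => (Y.val * (H.val * pinv (eigShift X.val i) * H.val)).trace)
    (isBilinearMap_ipM.toLinearMap Y).isLinear (by unfold ipM; fun_prop) (by fun_prop)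
    (fun H ε hε => eventually_le_eigval_add_smul_of_isEigenspaceDensity hdensity hlead H hε)
    fun H hH => ?_
  refine ⟨⟨kerCompression (eigShift X.val i) (H.val * pinv (eigShift X.val i) * H.val),
    isSymm_kerCompression hN (isSymm_mul_pinv_mul hN H.2)⟩,
    trace_mul_kerCompression hN Y.2 hdensity.sub_mul_eq_zero, fun ε hε => ?_⟩
  exact eventually_eigval_add_smul_sub_kerCompression_le X.2 H.2
    (fun u hu => dotProduct_mulVec_le_of_mem_criticalCone hlead hH hu) hε

end SpecPaper
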